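/- arXiv:2202.08178 — 11 statements merged into one kernel-verified Lean document; each statement's English description precedes it below -/
import Mathlib

section
/- Characterization of strict pre-dissipativity with scaled quadratic storage (Theorem 4.5): Assume there exists c_K > 0 such that ‖Ku‖ ≥ c_K‖Bu‖ for all u ∈ U. Let P be a bounded self-adjoint operator on H and let (x_e,u_e) be a controlled equilibrium. Then the following are equivalent: (i) there exist γ > 0, w ∈ H and α of class 𝒦 such that 2Re⟨Ax + Bu, γPx + w⟩ ≤ ℓ(x,u) − ℓ(x_e,u_e) − α(‖x − x_e‖) for all x ∈ dom A and u ∈ U; (ii) there exists w̃ ∈ dom A* with A*w̃ = z + C*C x_e and B*w̃ = v + K*K u_e, and there exist η > 0 and m > 0 such that ‖Cx‖² − 2η Re⟨Ax, Px⟩ ≥ m‖x‖² for all x ∈ dom A. -/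
open scoped InnerProductSpace
open RCLike ContinuousLinearMap

/-- A function of class `𝒦`: continuous, strictly increasing on `[0,∞)` with `α 0 = 0`. -/
def IsClassK (α : ℝ → ℝ) : Prop :=
  ContinuousOn α (Set.Ici 0) ∧ StrictMonoOn α (Set.Ici 0) ∧ α 0 = 0

/-- The generalized linear-quadratic stage cost
`ℓ(x,u) = ‖Cx‖² + ‖Ku‖² + 2Re⟨z,x⟩ + 2Re⟨v,u⟩`. -/
noncomputable def ell {𝕜 H U Y Z : Type*} [RCLike 𝕜]
    [NormedAddCommGroup H] [InnerProductSpace 𝕜 H]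
    [NormedAddCommGroup U] [InnerProductSpace 𝕜 U]
    [NormedAddCommGroup Y] [InnerProductSpace 𝕜 Y]
    [NormedAddCommGroup Z] [InnerProductSpace 𝕜 Z]
    (C : H →L[𝕜] Y) (K : U →L[𝕜] Z) (z : H) (v : U) (x : H) (u : U) : ℝ :=
  ‖C x‖ ^ 2 + ‖K u‖ ^ 2 + 2 * re ⟪z, x⟫_𝕜 + 2 * re ⟪v, u⟫_𝕜

theorem aux_lin_zero {L Q : ℝ} (h : ∀ t : ℝ, t * L ≤ t ^ 2 * Q) : L = 0 := by
  have hq : 0 < |Q| + 1 := by positivity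
  have h1 := h (L / (|Q| + 1))
  have h2 : L / (|Q| + 1) * L = L ^ 2 * (|Q| + 1) / (|Q| + 1) ^ 2 := by field_simp
  have h3 : (L / (|Q| + 1)) ^ 2 * Q = L ^ 2 * Q / (|Q| + 1) ^ 2 := by field_simp
  rw [h2, h3, div_le_div_iff_of_pos_right (by positivity)] at h1
  have h4 := le_abs_self Q
  have h5 : L ^ 2 ≤ 0 := by nlinarith [sq_nonneg L]
  exact pow_eq_zero_iff (two_ne_zero) |>.1 (le_antisymm h5 (sq_nonneg L))

theorem aux_ell_diff {𝕜 H U Y Z : Type*} [RCLike 𝕜]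
    [NormedAddCommGroup H] [InnerProductSpace 𝕜 H] [CompleteSpace H]
    [NormedAddCommGroup U] [InnerProductSpace 𝕜 U] [CompleteSpace U]
    [NormedAddCommGroup Y] [InnerProductSpace 𝕜 Y] [CompleteSpace Y]
    [NormedAddCommGroup Z] [InnerProductSpace 𝕜 Z] [CompleteSpace Z]
    (C : H →L[𝕜] Y) (K : U →L[𝕜] Z) (z : H) (v : U) (xe h : H) (ue k : U) :
    ell C K z v (xe + h) (ue + k) - ell C K z v xe ue =
      ‖C h‖ ^ 2 + ‖K k‖ ^ 2 + 2 * re ⟪z + adjoint C (C xe), h⟫_𝕜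
        + 2 * re ⟪v + adjoint K (K ue), k⟫_𝕜 := by
  unfold ell
  rw [map_add, map_add, @norm_add_sq 𝕜, @norm_add_sq 𝕜]
  simp only [inner_add_left, inner_add_right, map_add, adjoint_inner_left]
  ring

/-- shifted form of the dissipation inequality -/
theorem aux_shift {𝕜 H U Y Z : Type*} [RCLike 𝕜]
    [NormedAddCommGroup H] [InnerProductSpace 𝕜 H] [CompleteSpace H]
    [NormedAddCommGroup U] [InnerProductSpace 𝕜 U] [CompleteSpace U]
    [NormedAddCommGroup Y] [InnerProductSpace 𝕜 Y] [CompleteSpace Y]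
    [NormedAddCommGroup Z] [InnerProductSpace 𝕜 Z] [CompleteSpace Z]
    (A : H →ₗ.[𝕜] H)
    (B : U →L[𝕜] H) (C : H →L[𝕜] Y) (K : U →L[𝕜] Z) (z : H) (v : U)
    (P : H →L[𝕜] H)
    (xe : H) (ue : U) (hxe : xe ∈ A.domain) (heq : A ⟨xe, hxe⟩ + B ue = 0)
    (γ : ℝ) (w : H) (α : ℝ → ℝ) :
    (∀ (x : A.domain) (u : U),
        2 * re ⟪A x + B u, (γ : 𝕜) • P (x : H) + w⟫_𝕜 ≤
          ell C K z v (x : H) u - ell C K z v xe ue - α ‖(x : H) - xe‖) ↔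
    ∀ (h : A.domain) (k : U),
      2 * γ * (re ⟪A h, P (h : H)⟫_𝕜 + re ⟪B k, P (h : H)⟫_𝕜)
        + 2 * (re ⟪A h, (γ : 𝕜) • P xe + w⟫_𝕜 + re ⟪B k, (γ : 𝕜) • P xe + w⟫_𝕜) ≤
      ‖C (h : H)‖ ^ 2 + ‖K k‖ ^ 2 + 2 * re ⟪z + adjoint C (C xe), (h : H)⟫_𝕜
        + 2 * re ⟪v + adjoint K (K ue), k⟫_𝕜 - α ‖(h : H)‖ := by
  have key : ∀ (h : A.domain) (k : U),
      2 * re ⟪A (⟨xe, hxe⟩ + h) + B (ue + k), (γ : 𝕜) • P (xe + (h : H)) + w⟫_𝕜 =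
      2 * γ * (re ⟪A h, P (h : H)⟫_𝕜 + re ⟪B k, P (h : H)⟫_𝕜)
        + 2 * (re ⟪A h, (γ : 𝕜) • P xe + w⟫_𝕜 + re ⟪B k, (γ : 𝕜) • P xe + w⟫_𝕜) := by
    intro h k
    have e1 : A (⟨xe, hxe⟩ + h) + B (ue + k) = A h + B k := by
      rw [LinearPMap.map_add, map_add]
      calc _ = (A ⟨xe, hxe⟩ + B ue) + (A h + B k) := by abel
        _ = _ := by rw [heq, zero_add]
    rw [e1, map_add]
    simp only [smul_add, inner_add_left, inner_add_right, map_add, inner_smul_right, re_ofReal_mul]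
    ring
  constructor
  · intro H1 h k
    have := H1 (⟨xe, hxe⟩ + h) (ue + k)
    simp only [Submodule.coe_add] at this
    rw [key, aux_ell_diff, add_sub_cancel_left] at this
    exact this
  · intro H1 x u
    have := H1 (x - ⟨xe, hxe⟩) (u - ue)
    rw [← key, ← aux_ell_diff] at this
    simpa using this

/-- **Theorem 4.5**: characterization of strict pre-dissipativity at a controlled
equilibrium `(x_e, u_e)` with a scaled quadratic storage function `V_{γP,w}`. -/
theorem strict_predissipativity_scaled_quadratic_storage_iff
    {𝕜 H U Y Z : Type*} [RCLike 𝕜]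
    [NormedAddCommGroup H] [InnerProductSpace 𝕜 H] [CompleteSpace H]
    [NormedAddCommGroup U] [InnerProductSpace 𝕜 U] [CompleteSpace U]
    [NormedAddCommGroup Y] [InnerProductSpace 𝕜 Y] [CompleteSpace Y]
    [NormedAddCommGroup Z] [InnerProductSpace 𝕜 Z] [CompleteSpace Z]
    (A : H →ₗ.[𝕜] H) (hA : Dense (A.domain : Set H))
    (B : U →L[𝕜] H) (C : H →L[𝕜] Y) (K : U →L[𝕜] Z) (z : H) (v : U)
    (cK : ℝ) (hcK : 0 < cK) (hKB : ∀ u : U, cK * ‖B u‖ ≤ ‖K u‖)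
    (P : H →L[𝕜] H) (hP : IsSelfAdjoint P)
    (xe : H) (ue : U) (hxe : xe ∈ A.domain) (heq : A ⟨xe, hxe⟩ + B ue = 0) :
    (∃ γ : ℝ, 0 < γ ∧ ∃ w : H, ∃ α : ℝ → ℝ, IsClassK α ∧
      ∀ (x : A.domain) (u : U),
        2 * re ⟪A x + B u, (γ : 𝕜) • P (x : H) + w⟫_𝕜 ≤
          ell C K z v (x : H) u - ell C K z v xe ue - α ‖(x : H) - xe‖)
    ↔
    ((∃ w' : H, ∃ hw' : w' ∈ A.adjoint.domain,
        A.adjoint ⟨w', hw'⟩ = z + adjoint C (C xe) ∧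
        adjoint B w' = v + adjoint K (K ue)) ∧
      ∃ η : ℝ, 0 < η ∧ ∃ m : ℝ, 0 < m ∧
        ∀ x : A.domain,
          m * ‖(x : H)‖ ^ 2 ≤ ‖C (x : H)‖ ^ 2 - 2 * η * re ⟪A x, P (x : H)⟫_𝕜) := by
  constructor
  · rintro ⟨γ, hγ, w, α, ⟨-, hα, hα0⟩, H1⟩
    rw [aux_shift A B C K z v P xe ue hxe heq] at H1
    have hαn : ∀ r : ℝ, 0 ≤ r → 0 ≤ α r := fun r hr => by
      rw [← hα0]; exact hα.monotoneOn (by simp) hr hr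
    set w' : H := (γ : 𝕜) • P xe + w with hw'
    set q : H := z + adjoint C (C xe) with hq
    set r : U := v + adjoint K (K ue) with hr
    have lin : ∀ (h : A.domain) (k : U),
        (re ⟪A h, w'⟫_𝕜 + re ⟪B k, w'⟫_𝕜) - re ⟪q, (h : H)⟫_𝕜 - re ⟪r, k⟫_𝕜 = 0 := by
      intro h k
      apply aux_lin_zero (Q := (‖C (h : H)‖ ^ 2 + ‖K k‖ ^ 2 -
        2 * γ * (re ⟪A h, P (h : H)⟫_𝕜 + re ⟪B k, P (h : H)⟫_𝕜)) / 2)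
      intro t
      have h1 := H1 ((t : 𝕜) • h) ((t : 𝕜) • k)
      have h2 := hαn _ (norm_nonneg (((t : 𝕜) • h : A.domain) : H))
      simp only [LinearPMap.map_smul, Submodule.coe_smul, map_smul, inner_smul_left,
        inner_smul_right, conj_ofReal, re_ofReal_mul, norm_smul, norm_ofReal, mul_pow,
        sq_abs] at h1 h2
      linarith
    have linA : ∀ h : A.domain, re ⟪A h, w'⟫_𝕜 = re ⟪q, (h : H)⟫_𝕜 := by
      intro h
      have := lin h 0
      simp only [map_zero, inner_zero_left, inner_zero_right] at this
      linarith
    have linB : ∀ k : U, re ⟪B k, w'⟫_𝕜 = re ⟪r, k⟫_𝕜 := by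
      intro k
      have := lin 0 k
      simp only [LinearPMap.map_zero, Submodule.coe_zero, map_zero, inner_zero_left, inner_zero_right] at this
      linarith
    have cA : ∀ h : A.domain, ⟪q, (h : H)⟫_𝕜 = ⟪w', A h⟫_𝕜 := by
      intro h
      apply RCLike.ext
      · rw [← linA, inner_re_symm]
      · have h1 := linA ((I : 𝕜) • h)
        rw [LinearPMap.map_smul, inner_re_symm, Submodule.coe_smul, inner_smul_right,
          inner_smul_right, I_mul_re, I_mul_re] at h1
        linarith
    have cB : ∀ k : U, ⟪r, k⟫_𝕜 = ⟪w', B k⟫_𝕜 := by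
      intro h
      apply RCLike.ext
      · rw [← linB, inner_re_symm]
      · have h1 := linB ((I : 𝕜) • h)
        rw [map_smul, inner_re_symm, inner_smul_right,
          inner_smul_right, I_mul_re, I_mul_re] at h1
        linarith
    refine ⟨⟨w', LinearPMap.mem_adjoint_domain_of_exists _ ⟨q, cA⟩,
      LinearPMap.adjoint_apply_eq hA _ cA, ?_⟩, γ, hγ, α 1, ?_, ?_⟩
    · apply ext_inner_right 𝕜
      intro k
      rw [adjoint_inner_left, cB]
    · rw [← hα0]; exact hα (by simp) (by simp) one_pos
    · intro x
      by_cases hx : (x : H) = 0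
      · have : x = 0 := Subtype.ext hx
        subst this
        simp
      have hn : 0 < ‖(x : H)‖ := norm_pos_iff.2 hx
      have h1 := H1 (((‖(x : H)‖⁻¹ : ℝ) : 𝕜) • x) 0
      have h3 := linA (((‖(x : H)‖⁻¹ : ℝ) : 𝕜) • x)
      simp only [map_zero, inner_zero_left, inner_zero_right, norm_zero] at h1
      have h4 : ‖((((‖(x : H)‖⁻¹ : ℝ) : 𝕜) • x : A.domain) : H)‖ = 1 := by
        rw [Submodule.coe_smul, norm_smul, norm_ofReal, abs_of_pos (by positivity)]
        field_simp
      rw [h4, h3] at h1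
      simp only [LinearPMap.map_smul, Submodule.coe_smul, map_smul, inner_smul_left,
        inner_smul_right, conj_ofReal, re_ofReal_mul, norm_smul, norm_ofReal, mul_pow,
        sq_abs] at h1
      have h5 : α 1 ≤ (‖(x : H)‖⁻¹) ^ 2 *
          (‖C (x : H)‖ ^ 2 - 2 * γ * re ⟪A x, P (x : H)⟫_𝕜) := by linarith
      calc α 1 * ‖(x : H)‖ ^ 2 ≤ ((‖(x : H)‖⁻¹) ^ 2 *
          (‖C (x : H)‖ ^ 2 - 2 * γ * re ⟪A x, P (x : H)⟫_𝕜)) * ‖(x : H)‖ ^ 2 := by gcongr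
        _ = _ := by field_simp
  · rintro ⟨⟨w', hw', hwA, hwB⟩, η, hη, m, hm, H2⟩
    set D : ℝ := (η * ‖P‖ / cK) ^ 2 with hD
    have hD0 : 0 ≤ D := sq_nonneg _
    obtain ⟨s, hs0, hs1, hsD⟩ : ∃ s : ℝ, 0 < s ∧ s ≤ 1 ∧ s * D ≤ m / 2 := by
      refine ⟨min 1 (m / (2 * (D + 1))), by positivity, min_le_left _ _, ?_⟩
      calc _ ≤ m / (2 * (D + 1)) * (D + 1) := by
            gcongr
            · exact min_le_right _ _
            · linarith
        _ = m / 2 := by field_simp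
    refine ⟨s * η, by positivity, w' - ((s * η : ℝ) : 𝕜) • P xe, fun r => s * m / 2 * r ^ 2,
      ⟨by fun_prop, ?_, by simp⟩, ?_⟩
    · intro a ha b hb hab
      have ha' : 0 ≤ a := ha
      have : 0 < s * m / 2 := by positivity
      show s * m / 2 * a ^ 2 < s * m / 2 * b ^ 2
      gcongr
    refine (aux_shift A B C K z v P xe ue hxe heq _ _ (fun r => s * m / 2 * r ^ 2)).2 ?_
    intro h k
    rw [add_sub_cancel]
    have eA : re ⟪A h, w'⟫_𝕜 = re ⟪z + adjoint C (C xe), (h : H)⟫_𝕜 := by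
      rw [← hwA, LinearPMap.adjoint_isFormalAdjoint hA ⟨w', hw'⟩ h, inner_re_symm]
    have eB : re ⟪B k, w'⟫_𝕜 = re ⟪v + adjoint K (K ue), k⟫_𝕜 := by
      rw [← hwB, adjoint_inner_left, inner_re_symm]
    rw [eA, eB]
    have b1 : re ⟪B k, P (h : H)⟫_𝕜 ≤ ‖K k‖ / cK * (‖P‖ * ‖(h : H)‖) := by
      refine (re_inner_le_norm _ _).trans ?_
      gcongr
      · rw [le_div_iff₀ hcK, mul_comm]; exact hKB k
      · exact P.le_opNorm _
    have b2 : 2 * (s * η) * re ⟪B k, P (h : H)⟫_𝕜 ≤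
        ‖K k‖ ^ 2 + s ^ 2 * D * ‖(h : H)‖ ^ 2 := by
      have e : 2 * (s * η) * re ⟪B k, P (h : H)⟫_𝕜 ≤
        2 * (s * η) * (‖K k‖ / cK * (‖P‖ * ‖(h : H)‖)) := by gcongr
      have e2 : 2 * (s * η) * (‖K k‖ / cK * (‖P‖ * ‖(h : H)‖)) =
        2 * ‖K k‖ * (s * (η * ‖P‖ / cK) * ‖(h : H)‖) := by ring
      have e3 := two_mul_le_add_sq ‖K k‖ (s * (η * ‖P‖ / cK) * ‖(h : H)‖)
      rw [mul_pow, mul_pow] at e3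
      linarith
    have b3 : s * (m * ‖(h : H)‖ ^ 2) ≤
        s * (‖C (h : H)‖ ^ 2 - 2 * η * re ⟪A h, P (h : H)⟫_𝕜) := by
      gcongr; exact H2 h
    have b4 : s * ‖C (h : H)‖ ^ 2 ≤ ‖C (h : H)‖ ^ 2 :=
      mul_le_of_le_one_left (by positivity) hs1
    have b5 : s * ‖(h : H)‖ ^ 2 * (s * D) ≤ s * ‖(h : H)‖ ^ 2 * (m / 2) := by gcongr
    linarith
end

section
/- Strict pre-dissipativity at some steady state (Theorem 4.7): Assume A is densely defined and closed, K is coercive (there is c > 0 with ‖Ku‖ ≥ c‖u‖ for all u ∈ U), and the range {Ax + Bu : x ∈ dom A, u ∈ U} is closed in H. Let P be a bounded self-adjoint operator on H. Then there exist γ > 0, w ∈ H, a controlled equilibrium (x_e,u_e) and α of class 𝒦 such that 2Re⟨Ax + Bu, γPx + w⟩ ≤ ℓ(x,u) − ℓ(x_e,u_e) − α(‖x − x_e‖) for all x ∈ dom A, u ∈ U, if and only if there exist η > 0 and m > 0 such that ‖Cx‖² − 2η Re⟨Ax, Px⟩ ≥ m‖x‖² for all x ∈ dom A. Moreover, in this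 case (x_e,u_e) can be chosen as the unique minimizer of ℓ over the set {(x,u) ∈ dom A × U : Ax + Bu = 0}. -/
open scoped InnerProductSpace
open RCLike ContinuousLinearMap

theorem aux_factor {𝕜 X F : Type*} [RCLike 𝕜]
    [NormedAddCommGroup X] [NormedSpace 𝕜 X] [CompleteSpace X]
    [NormedAddCommGroup F] [InnerProductSpace 𝕜 F] [CompleteSpace F]
    (T : X →L[𝕜] F) (hT : IsClosed (Set.range T)) (f : X →L[𝕜] 𝕜)
    (hf : ∀ p, T p = 0 → f p = 0) : ∃ q : X, ∀ p, f p = ⟪T q, T p⟫_𝕜 := by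
  have hc : IsClosed (LinearMap.range (T : X →ₗ[𝕜] F) : Set F) := by
    exact hT
  have : CompleteSpace (LinearMap.range (T : X →ₗ[𝕜] F)) := hc.completeSpace_coe
  let π : X →L[𝕜] LinearMap.range (T : X →ₗ[𝕜] F) :=
    T.codRestrict _ (fun x => ⟨x, rfl⟩)
  have hπ : Function.Surjective π := by
    rintro ⟨_, x, rfl⟩
    exact ⟨x, rfl⟩
  have hπT : ∀ x, ((π x : LinearMap.range (T : X →ₗ[𝕜] F)) : F) = T x := fun x => rfl
  obtain ⟨s, hs⟩ : ∃ s : LinearMap.range (T : X →ₗ[𝕜] F) →ₗ[𝕜] X,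
      (π : X →ₗ[𝕜] LinearMap.range (T : X →ₗ[𝕜] F)).comp s = LinearMap.id := by
    apply LinearMap.exists_rightInverse_of_surjective
    exact LinearMap.range_eq_top.2 hπ
  have hs' : ∀ r, π (s r) = r := fun r => LinearMap.congr_fun hs r
  have key : ∀ p p', π p = π p' → f p = f p' := by
    intro p p' h
    have : f (p - p') = 0 := by
      apply hf
      rw [map_sub, ← hπT, ← hπT, h, sub_self]
    rw [map_sub] at this
    exact sub_eq_zero.1 this
  obtain ⟨M, hM, hpre⟩ := π.exists_preimage_norm_le hπ
  let g : LinearMap.range (T : X →ₗ[𝕜] F) →L[𝕜] 𝕜 :=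
    ((f : X →ₗ[𝕜] 𝕜).comp s).mkContinuous (‖f‖ * M) (by
      intro r
      obtain ⟨p, hp, hpn⟩ := hpre r
      have : f (s r) = f p := key _ _ (by rw [hs', hp])
      change ‖f (s r)‖ ≤ _
      rw [this, mul_assoc]
      exact (f.le_opNorm p).trans (by gcongr))
  obtain ⟨q, hq⟩ := hπ ((InnerProductSpace.toDual 𝕜 _).symm g)
  refine ⟨q, fun p => ?_⟩
  have h1 : g (π p) = f p := key _ _ (hs' _)
  have h2 : ⟪(InnerProductSpace.toDual 𝕜 _).symm g, π p⟫_𝕜 = g (π p) :=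
    InnerProductSpace.toDual_symm_apply
  rw [← h1, ← h2, ← hq]
  rfl

theorem aux_factor_bdd {𝕜 X F G : Type*} [RCLike 𝕜]
    [NormedAddCommGroup X] [NormedSpace 𝕜 X] [CompleteSpace X]
    [NormedAddCommGroup F] [InnerProductSpace 𝕜 F]
    [NormedAddCommGroup G] [InnerProductSpace 𝕜 G] [CompleteSpace G]
    (T : X →L[𝕜] F) (S : X →L[𝕜] G) (k : ℝ) (hk : 0 ≤ k)
    (hb : ∀ p, T p = 0 → ‖p‖ ≤ k * ‖S p‖) (φ : X →L[𝕜] 𝕜) :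
    ∃ q, T q = 0 ∧ ∀ p, T p = 0 → φ p = ⟪S q, S p⟫_𝕜 := by
  have hNc : IsClosed (LinearMap.ker (T : X →ₗ[𝕜] F) : Set X) := T.isClosed_ker
  have : CompleteSpace (LinearMap.ker (T : X →ₗ[𝕜] F)) := hNc.completeSpace_coe
  let R := S.comp (LinearMap.ker (T : X →ₗ[𝕜] F)).subtypeL
  have hR : ∀ p, ‖p‖ ≤ k * ‖R p‖ := fun p => hb p p.2
  have hRr : IsClosed (Set.range R) := by
    have : AntilipschitzWith (Real.toNNReal k) R := by
      apply AddMonoidHomClass.antilipschitz_of_bound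
      intro p
      rw [Real.coe_toNNReal _ hk]
      exact hR p
    exact this.isClosed_range R.uniformContinuous
  obtain ⟨q, hq⟩ := aux_factor R hRr (φ.comp (LinearMap.ker (T : X →ₗ[𝕜] F)).subtypeL) (by
    intro p hp
    have h1 := hR p
    rw [hp, norm_zero, mul_zero] at h1
    rw [norm_le_zero_iff.1 h1, map_zero])
  exact ⟨q, q.2, fun p hp => hq ⟨p, hp⟩⟩

theorem aux_ell {𝕜 H U Y Z : Type*} [RCLike 𝕜]
    [NormedAddCommGroup H] [InnerProductSpace 𝕜 H]
    [NormedAddCommGroup U] [InnerProductSpace 𝕜 U]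
    [NormedAddCommGroup Y] [InnerProductSpace 𝕜 Y]
    [NormedAddCommGroup Z] [InnerProductSpace 𝕜 Z]
    (C : H →L[𝕜] Y) (K : U →L[𝕜] Z) (z : H) (v : U) (x ξ : H) (u υ : U) :
    ell C K z v (x + ξ) (u + υ) = ell C K z v x u + ‖C ξ‖ ^ 2 + ‖K υ‖ ^ 2
      + 2 * re (⟪C x, C ξ⟫_𝕜 + ⟪K u, K υ⟫_𝕜 + ⟪z, ξ⟫_𝕜 + ⟪v, υ⟫_𝕜) := by
  simp only [ell, map_add, inner_add_right]
  rw [@norm_add_sq 𝕜, @norm_add_sq 𝕜]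
  ring

theorem aux_coercive {𝕜 H U Y Z : Type*} [RCLike 𝕜]
    [NormedAddCommGroup H] [InnerProductSpace 𝕜 H]
    [NormedAddCommGroup U] [InnerProductSpace 𝕜 U]
    [NormedAddCommGroup Y] [InnerProductSpace 𝕜 Y]
    [NormedAddCommGroup Z] [InnerProductSpace 𝕜 Z]
    (A : H →ₗ.[𝕜] H)
    (B : U →L[𝕜] H) (C : H →L[𝕜] Y) (K : U →L[𝕜] Z)
    (c : ℝ) (hc : 0 < c) (hK : ∀ u : U, c * ‖u‖ ≤ ‖K u‖)
    (P : H →L[𝕜] H) (η : ℝ) (hη : 0 < η) (m : ℝ) (hm : 0 < m)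
    (h : ∀ x : A.domain,
          m * ‖(x : H)‖ ^ 2 ≤ ‖C (x : H)‖ ^ 2 - 2 * η * re ⟪A x, P (x : H)⟫_𝕜) :
    ∃ γ : ℝ, 0 < γ ∧ ∃ μ : ℝ, 0 < μ ∧ ∀ (x : A.domain) (u : U),
      μ * (‖(x : H)‖ ^ 2 + ‖u‖ ^ 2) ≤ ‖C (x : H)‖ ^ 2 + ‖K u‖ ^ 2
        - 2 * γ * re ⟪A x + B u, P (x : H)⟫_𝕜 := by
  set b : ℝ := ‖B‖ * ‖P‖ with hb
  have hb0 : 0 ≤ b := by positivity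
  set k : ℝ := 2 * η ^ 2 * b ^ 2 / m with hk
  have hk0 : 0 ≤ k := by positivity
  set θ : ℝ := min 1 (c ^ 2 / (2 * (k + 1))) with hθ
  have hθ0 : 0 < θ := by positivity
  have hθ1 : θ ≤ 1 := min_le_left _ _
  have hθk : θ * k ≤ c ^ 2 / 2 := by
    have h2 : θ ≤ c ^ 2 / (2 * (k + 1)) := min_le_right _ _
    rw [le_div_iff₀ (by positivity)] at h2
    nlinarith
  refine ⟨θ * η, by positivity, min (θ * m / 2) (c ^ 2 / 2), by positivity, fun x u => ?_⟩
  have h1 := h x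
  have hKu : c ^ 2 * ‖u‖ ^ 2 ≤ ‖K u‖ ^ 2 := by
    rw [← mul_pow]; exact pow_le_pow_left₀ (by positivity) (hK u) 2
  have hcross : re ⟪B u, P (x : H)⟫_𝕜 ≤ b * (‖u‖ * ‖(x : H)‖) := by
    calc re ⟪B u, P (x : H)⟫_𝕜 ≤ ‖B u‖ * ‖P (x : H)‖ := re_inner_le_norm _ _
      _ ≤ (‖B‖ * ‖u‖) * (‖P‖ * ‖(x : H)‖) := by
        gcongr
        · exact B.le_opNorm u
        · exact P.le_opNorm _
      _ = b * (‖u‖ * ‖(x : H)‖) := by rw [hb]; ring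
  have hyoung : 2 * η * (b * (‖u‖ * ‖(x : H)‖)) ≤ m / 2 * ‖(x : H)‖ ^ 2 + k * ‖u‖ ^ 2 := by
    have : m / 2 * ‖(x : H)‖ ^ 2 + k * ‖u‖ ^ 2 - 2 * η * (b * (‖u‖ * ‖(x : H)‖))
        = (m * ‖(x : H)‖ - 2 * η * b * ‖u‖) ^ 2 / (2 * m) := by
      rw [hk]; field_simp; ring
    have h3 : 0 ≤ (m * ‖(x : H)‖ - 2 * η * b * ‖u‖) ^ 2 / (2 * m) := by positivity
    linarith
  have h4 : 2 * η * re ⟪B u, P (x : H)⟫_𝕜 ≤ m / 2 * ‖(x : H)‖ ^ 2 + k * ‖u‖ ^ 2 :=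
    le_trans (by gcongr) hyoung
  rw [inner_add_left, map_add]
  have e1 := mul_le_mul_of_nonneg_left h1 hθ0.le
  have e2 := mul_le_mul_of_nonneg_left h4 hθ0.le
  have e3 : θ * ‖C (x : H)‖ ^ 2 ≤ ‖C (x : H)‖ ^ 2 :=
    mul_le_of_le_one_left (by positivity) hθ1
  have e4 : θ * k * ‖u‖ ^ 2 ≤ c ^ 2 / 2 * ‖u‖ ^ 2 := by gcongr
  have e5 : min (θ * m / 2) (c ^ 2 / 2) * ‖(x : H)‖ ^ 2 ≤ θ * m / 2 * ‖(x : H)‖ ^ 2 := by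
    gcongr; exact min_le_left _ _
  have e6 : min (θ * m / 2) (c ^ 2 / 2) * ‖u‖ ^ 2 ≤ c ^ 2 / 2 * ‖u‖ ^ 2 := by
    gcongr; exact min_le_right _ _
  linarith

theorem aux_main {𝕜 H U Y Z : Type*} [RCLike 𝕜]
    [NormedAddCommGroup H] [InnerProductSpace 𝕜 H] [CompleteSpace H]
    [NormedAddCommGroup U] [InnerProductSpace 𝕜 U] [CompleteSpace U]
    [NormedAddCommGroup Y] [InnerProductSpace 𝕜 Y] [CompleteSpace Y]
    [NormedAddCommGroup Z] [InnerProductSpace 𝕜 Z] [CompleteSpace Z]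
    (A : H →ₗ.[𝕜] H) (hAclosed : A.IsClosed)
    (B : U →L[𝕜] H) (C : H →L[𝕜] Y) (K : U →L[𝕜] Z) (z : H) (v : U)
    (hran : IsClosed {y : H | ∃ (x : A.domain) (u : U), A x + B u = y})
    (P : H →L[𝕜] H) (γ μ : ℝ) (hμ : 0 < μ)
    (h : ∀ (x : A.domain) (u : U),
      μ * (‖(x : H)‖ ^ 2 + ‖u‖ ^ 2) ≤ ‖C (x : H)‖ ^ 2 + ‖K u‖ ^ 2
        - 2 * γ * re ⟪A x + B u, P (x : H)⟫_𝕜) :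
    ∃ (xe : A.domain) (ue : U) (w : H), A xe + B ue = 0 ∧ ∀ (x : A.domain) (u : U),
      2 * re ⟪A x + B u, (γ : 𝕜) • P (x : H) + w⟫_𝕜 ≤
        ell C K z v (x : H) u - ell C K z v xe ue
          - μ * (‖(x : H) - xe‖ ^ 2 + ‖u - ue‖ ^ 2) := by
  have : CompleteSpace A.graph := IsClosed.completeSpace_coe (hs := hAclosed)
  let px : (A.graph × U) →L[𝕜] H :=
    (ContinuousLinearMap.fst 𝕜 H H).comp (A.graph.subtypeL.comp (ContinuousLinearMap.fst 𝕜 A.graph U))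
  let py : (A.graph × U) →L[𝕜] H :=
    (ContinuousLinearMap.snd 𝕜 H H).comp (A.graph.subtypeL.comp (ContinuousLinearMap.fst 𝕜 A.graph U))
  let pu : (A.graph × U) →L[𝕜] U := ContinuousLinearMap.snd 𝕜 A.graph U
  let T : (A.graph × U) →L[𝕜] H := py + B.comp pu
  have hrep : ∀ p : A.graph × U, ∃ x : A.domain, (x : H) = px p ∧ A x = py p := by
    intro p
    obtain ⟨x, hx1, hx2⟩ := (LinearPMap.mem_graph_iff A).1 p.1.2
    exact ⟨x, hx1, hx2⟩
  let mk : A.domain → U → (A.graph × U) := fun x u => (⟨((x : H), A x), A.mem_graph x⟩, u)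
  have hTmk : ∀ x u, T (mk x u) = A x + B u := fun x u => rfl
  have hTran : IsClosed (Set.range T) := by
    convert hran using 1
    ext y
    constructor
    · rintro ⟨p, rfl⟩
      obtain ⟨x, hx, hy⟩ := hrep p
      exact ⟨x, p.2, by rw [hy]; rfl⟩
    · rintro ⟨x, u, rfl⟩
      exact ⟨mk x u, rfl⟩
  have hcoer : ∀ p, T p = 0 → μ * (‖px p‖ ^ 2 + ‖pu p‖ ^ 2) ≤ ‖C (px p)‖ ^ 2 + ‖K (pu p)‖ ^ 2 := by
    intro p hp
    obtain ⟨x, hx, hy⟩ := hrep p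
    have h1 := h x (pu p)
    have h2 : A x + B (pu p) = 0 := by rw [hy]; exact hp
    rw [h2, inner_zero_left, map_zero, hx] at h1
    linarith
  let S : (A.graph × U) →L[𝕜] WithLp 2 (Y × Z) :=
    ((WithLp.prodContinuousLinearEquiv 2 𝕜 Y Z).symm : (Y × Z) →L[𝕜] WithLp 2 (Y × Z)).comp
      ((C.comp px).prod (K.comp pu))
  have hSn : ∀ p, ‖S p‖ ^ 2 = ‖C (px p)‖ ^ 2 + ‖K (pu p)‖ ^ 2 := by
    intro p
    rw [WithLp.prod_norm_sq_eq_of_L2]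
    rfl
  have hSi : ∀ p q, ⟪S p, S q⟫_𝕜 = ⟪C (px p), C (px q)⟫_𝕜 + ⟪K (pu p), K (pu q)⟫_𝕜 := by
    intro p q
    rw [WithLp.prod_inner_apply]
    rfl
  have hSb : ∀ p, T p = 0 → ‖p‖ ≤ ((1 + ‖B‖) / √μ) * ‖S p‖ := by
    intro p hp
    have h1 := hcoer p hp
    rw [← hSn] at h1
    have hsm : 0 < √μ := Real.sqrt_pos.2 hμ
    have hss : √μ ^ 2 = μ := Real.sq_sqrt hμ.le
    have hx : √μ * ‖px p‖ ≤ ‖S p‖ := by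
      refine (sq_le_sq₀ (by positivity) (norm_nonneg _)).1 ?_
      rw [mul_pow, hss]; nlinarith [sq_nonneg ‖pu p‖]
    have hu : √μ * ‖pu p‖ ≤ ‖S p‖ := by
      refine (sq_le_sq₀ (by positivity) (norm_nonneg _)).1 ?_
      rw [mul_pow, hss]; nlinarith [sq_nonneg ‖px p‖]
    have hy : ‖py p‖ ≤ ‖B‖ * ‖pu p‖ := by
      have : py p = - B (pu p) := eq_neg_of_add_eq_zero_left hp
      rw [this, norm_neg]; exact B.le_opNorm _
    have hB := norm_nonneg B
    have hS := norm_nonneg (S p)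
    have hn : ‖p‖ = max (max ‖px p‖ ‖py p‖) ‖pu p‖ := rfl
    rw [hn, div_mul_eq_mul_div, le_div_iff₀ hsm, mul_comm]
    rcases max_choice (max ‖px p‖ ‖py p‖) ‖pu p‖ with e | e <;> rw [e]
    · rcases max_choice ‖px p‖ ‖py p‖ with e | e <;> rw [e]
      · nlinarith
      · nlinarith [mul_le_mul_of_nonneg_left hy hsm.le, mul_le_mul_of_nonneg_left hu hB]
    · nlinarith
  let φ : (A.graph × U) →L[𝕜] 𝕜 := (innerSL 𝕜 z).comp px + (innerSL 𝕜 v).comp pu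
  obtain ⟨q, hqT, hq⟩ := aux_factor_bdd T S _ (by positivity) hSb φ
  obtain ⟨xe, hxe, hye⟩ := hrep (-q)
  set ue : U := pu (-q) with hue
  have heq : A xe + B ue = 0 := by
    rw [hye]; exact (by rw [map_neg, hqT, neg_zero] : T (-q) = 0)
  let f : (A.graph × U) →L[𝕜] 𝕜 :=
    (innerSL 𝕜 (C xe)).comp (C.comp px) + (innerSL 𝕜 (K ue)).comp (K.comp pu) + φ
  have hfmk : ∀ p, f p = ⟪C xe, C (px p)⟫_𝕜 + ⟪K ue, K (pu p)⟫_𝕜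
      + (⟪z, px p⟫_𝕜 + ⟪v, pu p⟫_𝕜) := fun p => rfl
  have hf0 : ∀ p, T p = 0 → f p = 0 := by
    intro p hp
    have h1 := hSi (-q) p
    have h2 : ⟪z, px p⟫_𝕜 + ⟪v, pu p⟫_𝕜 = ⟪S q, S p⟫_𝕜 := hq p hp
    rw [map_neg, inner_neg_left] at h1
    rw [hfmk, h2, hxe, hue, ← h1]
    simp
  obtain ⟨r, hr⟩ := aux_factor T hTran f hf0
  refine ⟨xe, ue, T r - (γ : 𝕜) • P xe, heq, fun x u => ?_⟩
  have hm := hr (mk (x - xe) (u - ue))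
  rw [hfmk, hTmk] at hm
  have hh := h (x - xe) (u - ue)
  have hpx : px (mk (x - xe) (u - ue)) = (x : H) - xe := rfl
  have hpu : pu (mk (x - xe) (u - ue)) = u - ue := rfl
  have hAx : A (x - xe) + B (u - ue) = A x + B u := by
    rw [LinearPMap.map_sub, map_sub]
    have : A x - A xe + (B u - B ue) = A x + B u - (A xe + B ue) := by abel
    rw [this, heq, sub_zero]
  rw [hAx] at hm hh
  rw [hpx, hpu] at hm
  rw [AddSubgroupClass.coe_sub] at hh
  have hell := aux_ell C K z v (xe : H) ((x : H) - xe) ue (u - ue)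
  rw [add_sub_cancel, add_sub_cancel, add_assoc (_ + _) ⟪z, _⟫_𝕜, hm] at hell
  rw [hell]
  have e1 : ⟪A x + B u, (γ : 𝕜) • P (x : H) + (T r - (γ : 𝕜) • P xe)⟫_𝕜
      = (γ : 𝕜) * ⟪A x + B u, P ((x : H) - xe)⟫_𝕜 + ⟪A x + B u, T r⟫_𝕜 := by
    rw [← inner_smul_right, ← inner_add_right, map_sub, smul_sub]
    congr 1
    abel
  rw [e1, map_add, re_ofReal_mul, inner_re_symm (𝕜 := 𝕜) (A x + B u) (T r)]
  linarith

theorem aux_forward {𝕜 H U Y Z : Type*} [RCLike 𝕜]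
    [NormedAddCommGroup H] [InnerProductSpace 𝕜 H]
    [NormedAddCommGroup U] [InnerProductSpace 𝕜 U]
    [NormedAddCommGroup Y] [InnerProductSpace 𝕜 Y]
    [NormedAddCommGroup Z] [InnerProductSpace 𝕜 Z]
    (A : H →ₗ.[𝕜] H)
    (B : U →L[𝕜] H) (C : H →L[𝕜] Y) (K : U →L[𝕜] Z) (z : H) (v : U)
    (P : H →L[𝕜] H) (γ : ℝ) (w : H) (xe : A.domain) (ue : U)
    (heq : A xe + B ue = 0) (α : ℝ → ℝ)
    (h : ∀ (x : A.domain) (u : U),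
          2 * re ⟪A x + B u, (γ : 𝕜) • P (x : H) + w⟫_𝕜 ≤
            ell C K z v (x : H) u - ell C K z v xe ue - α ‖(x : H) - xe‖)
    (x : A.domain) :
    α 1 * ‖(x : H)‖ ^ 2 ≤ ‖C (x : H)‖ ^ 2 - 2 * γ * re ⟪A x, P (x : H)⟫_𝕜 := by
  have key : ∀ x : A.domain,
      α ‖(x : H)‖ ≤ ‖C (x : H)‖ ^ 2 - 2 * γ * re ⟪A x, P (x : H)⟫_𝕜 := by
    intro x
    have gen : ∀ x : A.domain, 2 * (γ * re ⟪A x, P (x : H)⟫_𝕜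
        + re ⟪A x, (γ : 𝕜) • P (xe : H) + w⟫_𝕜) ≤
        ‖C (x : H)‖ ^ 2 + 2 * re (⟪C xe, C x⟫_𝕜 + ⟪z, (x : H)⟫_𝕜) - α ‖(x : H)‖ := by
      intro x
      have h1 := h (xe + x) (ue + 0)
      rw [Submodule.coe_add, aux_ell, add_sub_cancel_left, LinearPMap.map_add, add_zero,
        add_right_comm, heq, zero_add] at h1
      have e1 : ⟪A x, (γ : 𝕜) • P ((xe : H) + x) + w⟫_𝕜
          = (γ : 𝕜) * ⟪A x, P (x : H)⟫_𝕜 + ⟪A x, (γ : 𝕜) • P (xe : H) + w⟫_𝕜 := by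
        rw [← inner_smul_right, ← inner_add_right, map_add, smul_add]
        congr 1
        abel
      rw [e1, map_add, re_ofReal_mul] at h1
      simp only [map_zero, norm_zero, inner_zero_right, add_zero] at h1
      linarith
    have g1 := gen x
    have g2 := gen (-x)
    simp only [LinearPMap.map_neg, NegMemClass.coe_neg, map_neg, inner_neg_left, inner_neg_right,
      norm_neg, neg_neg, map_add] at g1 g2
    linarith
  by_cases hx : (x : H) = 0
  · have : x = 0 := Subtype.ext hx
    subst this
    simp
  have hn : 0 < ‖(x : H)‖ := norm_pos_iff.2 hx
  have k1 := key (((‖(x : H)‖⁻¹ : ℝ) : 𝕜) • x)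
  have hnorm : ‖((‖(x : H)‖⁻¹ : ℝ) : 𝕜)‖ = ‖(x : H)‖⁻¹ := by
    rw [RCLike.norm_ofReal, abs_of_pos (inv_pos.2 hn)]
  rw [LinearPMap.map_smul, Submodule.coe_smul, map_smul, map_smul, norm_smul, norm_smul, hnorm,
    inv_mul_cancel₀ hn.ne', inner_smul_left, inner_smul_right, conj_ofReal, re_ofReal_mul,
    re_ofReal_mul] at k1
  have k2 := mul_le_mul_of_nonneg_right k1 (sq_nonneg ‖(x : H)‖)
  refine k2.trans_eq ?_
  field_simp

/-- **Theorem 4.7**: strict pre-dissipativity at *some* controlled equilibrium with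
storage function `V_{γP,w}` is equivalent to the Lyapunov-like form inequality;
moreover, the equilibrium can be chosen as the unique minimizer of the optimal
steady-state problem. -/
theorem strict_predissipativity_at_some_steady_state_iff
    {𝕜 H U Y Z : Type*} [RCLike 𝕜]
    [NormedAddCommGroup H] [InnerProductSpace 𝕜 H] [CompleteSpace H]
    [NormedAddCommGroup U] [InnerProductSpace 𝕜 U] [CompleteSpace U]
    [NormedAddCommGroup Y] [InnerProductSpace 𝕜 Y] [CompleteSpace Y]
    [NormedAddCommGroup Z] [InnerProductSpace 𝕜 Z] [CompleteSpace Z]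
    (A : H →ₗ.[𝕜] H) (hA : Dense (A.domain : Set H)) (hAclosed : A.IsClosed)
    (B : U →L[𝕜] H) (C : H →L[𝕜] Y) (K : U →L[𝕜] Z) (z : H) (v : U)
    (c : ℝ) (hc : 0 < c) (hK : ∀ u : U, c * ‖u‖ ≤ ‖K u‖)
    (hran : IsClosed {y : H | ∃ (x : A.domain) (u : U), A x + B u = y})
    (P : H →L[𝕜] H) (hP : IsSelfAdjoint P) :
    ((∃ γ : ℝ, 0 < γ ∧ ∃ w : H, ∃ xe : H, ∃ ue : U, ∃ hxe : xe ∈ A.domain,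
        A ⟨xe, hxe⟩ + B ue = 0 ∧ ∃ α : ℝ → ℝ, IsClassK α ∧
        ∀ (x : A.domain) (u : U),
          2 * re ⟪A x + B u, (γ : 𝕜) • P (x : H) + w⟫_𝕜 ≤
            ell C K z v (x : H) u - ell C K z v xe ue - α ‖(x : H) - xe‖)
      ↔
      (∃ η : ℝ, 0 < η ∧ ∃ m : ℝ, 0 < m ∧
        ∀ x : A.domain,
          m * ‖(x : H)‖ ^ 2 ≤ ‖C (x : H)‖ ^ 2 - 2 * η * re ⟪A x, P (x : H)⟫_𝕜))
    ∧
    ((∃ η : ℝ, 0 < η ∧ ∃ m : ℝ, 0 < m ∧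
        ∀ x : A.domain,
          m * ‖(x : H)‖ ^ 2 ≤ ‖C (x : H)‖ ^ 2 - 2 * η * re ⟪A x, P (x : H)⟫_𝕜) →
      ∃ (xe : H) (ue : U) (hxe : xe ∈ A.domain),
        A ⟨xe, hxe⟩ + B ue = 0 ∧
        -- (xe, ue) is a minimizer of ℓ over the steady states
        (∀ (x : A.domain) (u : U), A x + B u = 0 →
          ell C K z v xe ue ≤ ell C K z v (x : H) u) ∧
        -- and it is the unique such minimizer
        (∀ (x : A.domain) (u : U), A x + B u = 0 →
          (∀ (x' : A.domain) (u' : U), A x' + B u' = 0 →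
            ell C K z v (x : H) u ≤ ell C K z v (x' : H) u') →
          (x : H) = xe ∧ u = ue) ∧
        -- strict pre-dissipativity holds at (xe, ue)
        ∃ γ : ℝ, 0 < γ ∧ ∃ w : H, ∃ α : ℝ → ℝ, IsClassK α ∧
          ∀ (x : A.domain) (u : U),
            2 * re ⟪A x + B u, (γ : 𝕜) • P (x : H) + w⟫_𝕜 ≤
              ell C K z v (x : H) u - ell C K z v xe ue - α ‖(x : H) - xe‖) := by
  have back : (∃ η : ℝ, 0 < η ∧ ∃ m : ℝ, 0 < m ∧
        ∀ x : A.domain,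
          m * ‖(x : H)‖ ^ 2 ≤ ‖C (x : H)‖ ^ 2 - 2 * η * re ⟪A x, P (x : H)⟫_𝕜) →
      ∃ γ : ℝ, 0 < γ ∧ ∃ μ : ℝ, 0 < μ ∧
      ∃ (xe : A.domain) (ue : U) (w : H), A xe + B ue = 0 ∧ ∀ (x : A.domain) (u : U),
      2 * re ⟪A x + B u, (γ : 𝕜) • P (x : H) + w⟫_𝕜 ≤
        ell C K z v (x : H) u - ell C K z v xe ue
          - μ * (‖(x : H) - xe‖ ^ 2 + ‖u - ue‖ ^ 2) := by
    rintro ⟨η, hη, m, hm, h⟩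
    obtain ⟨γ, hγ, μ, hμ, h1⟩ := aux_coercive A B C K c hc hK P η hη m hm h
    exact ⟨γ, hγ, μ, hμ, aux_main A hAclosed B C K z v hran P γ μ hμ h1⟩
  have hKα : ∀ μ : ℝ, 0 < μ → IsClassK (fun r => μ * r ^ 2) := by
    intro μ hμ
    refine ⟨by fun_prop, ?_, by simp⟩
    intro a ha b hb hab
    have ha' : 0 ≤ a := ha
    have : a ^ 2 < b ^ 2 := pow_lt_pow_left₀ hab ha' two_ne_zero
    exact mul_lt_mul_of_pos_left this hμ
  have strong : (∃ η : ℝ, 0 < η ∧ ∃ m : ℝ, 0 < m ∧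
        ∀ x : A.domain,
          m * ‖(x : H)‖ ^ 2 ≤ ‖C (x : H)‖ ^ 2 - 2 * η * re ⟪A x, P (x : H)⟫_𝕜) →
      ∃ (xe : H) (ue : U) (hxe : xe ∈ A.domain),
        A ⟨xe, hxe⟩ + B ue = 0 ∧
        (∀ (x : A.domain) (u : U), A x + B u = 0 →
          ell C K z v xe ue ≤ ell C K z v (x : H) u) ∧
        (∀ (x : A.domain) (u : U), A x + B u = 0 →
          (∀ (x' : A.domain) (u' : U), A x' + B u' = 0 →
            ell C K z v (x : H) u ≤ ell C K z v (x' : H) u') →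
          (x : H) = xe ∧ u = ue) ∧
        ∃ γ : ℝ, 0 < γ ∧ ∃ w : H, ∃ α : ℝ → ℝ, IsClassK α ∧
          ∀ (x : A.domain) (u : U),
            2 * re ⟪A x + B u, (γ : 𝕜) • P (x : H) + w⟫_𝕜 ≤
              ell C K z v (x : H) u - ell C K z v xe ue - α ‖(x : H) - xe‖ := by
    intro hL
    obtain ⟨γ, hγ, μ, hμ, xe, ue, w, heq, h⟩ := back hL
    have h0 : ∀ (x : A.domain) (u : U), A x + B u = 0 →
        ell C K z v xe ue + μ * (‖(x : H) - xe‖ ^ 2 + ‖u - ue‖ ^ 2) ≤ ell C K z v (x : H) u := by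
      intro x u hxu
      have := h x u
      rw [hxu, inner_zero_left, map_zero] at this
      linarith
    refine ⟨xe, ue, xe.2, heq, fun x u hxu => ?_, fun x u hxu hmin => ?_,
      γ, hγ, w, _, hKα μ hμ, fun x u => ?_⟩
    · have := h0 x u hxu
      have : 0 ≤ μ * (‖(x : H) - xe‖ ^ 2 + ‖u - ue‖ ^ 2) := by positivity
      linarith
    · have h1 := h0 x u hxu
      have h2 := hmin xe ue heq
      have h3 : ‖(x : H) - xe‖ ^ 2 + ‖u - ue‖ ^ 2 ≤ 0 := by
        by_contra hcon
        have := mul_pos hμ (not_le.1 hcon)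
        linarith
      have s1 := sq_nonneg ‖(x : H) - xe‖
      have s2 := sq_nonneg ‖u - ue‖
      constructor
      · exact sub_eq_zero.1 (norm_eq_zero.1 (pow_eq_zero_iff two_ne_zero |>.1 (by linarith)))
      · exact sub_eq_zero.1 (norm_eq_zero.1 (pow_eq_zero_iff two_ne_zero |>.1 (by linarith)))
    · have h1 := h x u
      have h2 : 0 ≤ μ * ‖u - ue‖ ^ 2 := by positivity
      linarith
  refine ⟨⟨?_, ?_⟩, strong⟩
  · rintro ⟨γ, hγ, w, xe, ue, hxe, heq, α, ⟨-, hmono, hα0⟩, h⟩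
    refine ⟨γ, hγ, α 1, ?_, fun x => aux_forward A B C K z v P γ w ⟨xe, hxe⟩ ue heq α h x⟩
    have := hmono (Set.mem_Ici.2 le_rfl) (Set.mem_Ici.2 zero_le_one) zero_lt_one
    linarith
  · intro hL
    obtain ⟨xe, ue, hxe, heq, -, -, γ, hγ, w, α, hα, h⟩ := strong hL
    exact ⟨γ, hγ, w, xe, ue, hxe, heq, α, hα, h⟩
end

section
/- From a Lyapunov equality for an output-injected operator to the Lyapunov-like form inequality (first part of Theorem 5.2, stated via the Lyapunov characterization of exponential stability): Let H and Y be Hilbert spaces over 𝕜 (𝕜 = ℝ or ℂ), A a densely defined linear operator in H with domain dom A, C : H → Y bounded, F : Y → H bounded, and P a bounded positive self-adjoint operator on H (⟨Px,x⟩ > 0 for all x ≠ 0) such that 2Re⟨Ax + F(Cx), Px⟩ = −‖x‖² for all x ∈ dom A. Then there exist η > 0 and m > 0 such that ‖Cx‖² − 2η Re⟨Ax, Px⟩ ≥ m‖x‖² for all x ∈ dom A. -/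
open scoped InnerProductSpace
open RCLike ContinuousLinearMap

/-- **Theorem 5.2, first part** (via the Lyapunov characterization of exponential
stability): if there are a bounded output injection `F` and a bounded positive
self-adjoint `P` with `2Re⟨(A + FC)x, Px⟩ = -‖x‖²` on `dom A` (i.e. `(A,C)` is
exponentially detectable), then the Lyapunov-like form inequality
`‖Cx‖² - 2η Re⟨Ax, Px⟩ ≥ m‖x‖²` holds on `dom A` for some `η, m > 0`. -/
theorem lyapunov_form_inequality_of_detectability
    {𝕜 H Y : Type*} [RCLike 𝕜]
    [NormedAddCommGroup H] [InnerProductSpace 𝕜 H] [CompleteSpace H]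
    [NormedAddCommGroup Y] [InnerProductSpace 𝕜 Y] [CompleteSpace Y]
    (A : H →ₗ.[𝕜] H) (hA : Dense (A.domain : Set H))
    (C : H →L[𝕜] Y) (F : Y →L[𝕜] H)
    (P : H →L[𝕜] H) (hP : IsSelfAdjoint P)
    (hPpos : ∀ x : H, x ≠ 0 → 0 < re ⟪P x, x⟫_𝕜)
    (hLyap : ∀ x : A.domain, 2 * re ⟪A x + F (C (x : H)), P (x : H)⟫_𝕜 = -‖(x : H)‖ ^ 2) :
    ∃ η : ℝ, 0 < η ∧ ∃ m : ℝ, 0 < m ∧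
      ∀ x : A.domain,
        m * ‖(x : H)‖ ^ 2 ≤ ‖C (x : H)‖ ^ 2 - 2 * η * re ⟪A x, P (x : H)⟫_𝕜 := by
  set K : ℝ := ‖F‖ * ‖P‖ with hK
  obtain ⟨η, hη, hηK⟩ : ∃ η : ℝ, 0 < η ∧ η * (K ^ 2 + 1) = 1 / 2 :=
    ⟨1 / (2 * (K ^ 2 + 1)), by positivity, by field_simp⟩
  refine ⟨η, hη, η / 2, by positivity, fun x => ?_⟩
  have h1 := hLyap x
  rw [inner_add_left, map_add] at h1
  have h2 : -(K * ‖C (x : H)‖ * ‖(x : H)‖) ≤ re ⟪F (C (x : H)), P (x : H)⟫_𝕜 := by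
    have h3 := (abs_le.mp ((RCLike.abs_re_le_norm _).trans
      (norm_inner_le_norm (𝕜 := 𝕜) (F (C (x : H))) (P (x : H))))).1
    have h4 : ‖F (C (x : H))‖ * ‖P (x : H)‖ ≤ (‖F‖ * ‖C (x : H)‖) * (‖P‖ * ‖(x : H)‖) :=
      mul_le_mul (F.le_opNorm _) (P.le_opNorm _) (norm_nonneg _) (by positivity)
    have h5 : (‖F‖ * ‖C (x : H)‖) * (‖P‖ * ‖(x : H)‖) = K * ‖C (x : H)‖ * ‖(x : H)‖ := by
      rw [hK]; ring
    linarith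
  have h6 : η ^ 2 * K ^ 2 ≤ η / 2 := by nlinarith [sq_nonneg η]
  have h7 := mul_le_mul_of_nonneg_right h6 (sq_nonneg ‖(x : H)‖)
  have h8 := mul_le_mul_of_nonneg_left h2 hη.le
  have h9 : 2 * η * re ⟪A x, P (x : H)⟫_𝕜
      = -η * ‖(x : H)‖ ^ 2 - 2 * (η * re ⟪F (C (x : H)), P (x : H)⟫_𝕜) := by
    linear_combination η * h1
  rw [h9]
  nlinarith [sq_nonneg (‖C (x : H)‖ - η * K * ‖(x : H)‖)]
end

section
/- From the Lyapunov-like form inequality to an exponentially stabilizing output injection (second part of Theorem 5.2, stated via the Lyapunov characterization of exponential stability): Let H and Y be Hilbert spaces over 𝕜 (𝕜 = ℝ or ℂ), A a densely defined linear operator in H with domain dom A, C : H → Y bounded, P a bounded non-negative self-adjoint operator on H, and m > 0 such that ‖Cx‖² − 2Re⟨Ax, Px⟩ ≥ m‖x‖² for all x ∈ dom A. Assume moreover that ran C* ⊆ ran P, where C* is the adjoint of C. Then there exists a bounded linear operator F : Y → H such that 2Re⟨Ax + F(Cx), Px⟩ ≤ −m‖x‖² for all x ∈ dom A. -/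
open scoped InnerProductSpace
open RCLike ContinuousLinearMap

theorem douglas_aux {𝕜 H Y : Type*} [RCLike 𝕜]
    [NormedAddCommGroup H] [InnerProductSpace 𝕜 H] [CompleteSpace H]
    [NormedAddCommGroup Y] [InnerProductSpace 𝕜 Y] [CompleteSpace Y]
    (P : H →L[𝕜] H) (D : Y →L[𝕜] H)
    (hran : Set.range (D : Y → H) ⊆ Set.range (P : H → H)) :
    ∃ G : Y →L[𝕜] H, ∀ y, P (G y) = D y := by
  let N : Submodule 𝕜 H := LinearMap.ker (P : H →ₗ[𝕜] H)
  have hNc : IsClosed (N : Set H) := P.isClosed_ker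
  haveI : CompleteSpace N := hNc.completeSpace_coe
  have hex : ∀ y, ∃ z ∈ Nᗮ, P z = D y := by
    intro y
    obtain ⟨w, hw⟩ := hran ⟨y, rfl⟩
    refine ⟨w - N.starProjection w, N.sub_starProjection_mem_orthogonal w, ?_⟩
    have h : P (N.starProjection w) = 0 := N.starProjection_apply_mem w
    rw [map_sub, h, sub_zero, hw]
  have huniq : ∀ z ∈ Nᗮ, ∀ w ∈ Nᗮ, P z = P w → z = w := by
    intro z hz w hw h
    have h1 : z - w ∈ N := by
      change P (z - w) = 0
      rw [map_sub, h, sub_self]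
    have h2 : z - w ∈ Nᗮ := Nᗮ.sub_mem hz hw
    have h3 : inner 𝕜 (z - w) (z - w) = 0 := h2 _ h1
    exact sub_eq_zero.mp (inner_self_eq_zero.mp h3)
  choose g hg hPg using hex
  let g' : Y →ₗ[𝕜] H :=
    { toFun := g
      map_add' := fun a b => huniq _ (hg _) _ (Nᗮ.add_mem (hg _) (hg _)) (by
        simp only [map_add, hPg])
      map_smul' := fun c a => huniq _ (hg _) _ (Nᗮ.smul_mem _ (hg _)) (by
        simp only [map_smul, hPg, RingHom.id_apply]) }
  have hc : Continuous g' := by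
    refine g'.continuous_of_seq_closed_graph fun u x y hu hTu => ?_
    refine huniq _ ?_ _ (hg x) ?_
    · exact N.isClosed_orthogonal.mem_of_tendsto hTu (Filter.Eventually.of_forall fun n => hg _)
    · refine Eq.trans ?_ (hPg x).symm
      have h1 := (P.continuous.tendsto y).comp hTu
      have h2 := (D.continuous.tendsto x).comp hu
      refine tendsto_nhds_unique h1 (h2.congr fun n => ?_)
      exact (hPg (u n)).symm
  exact ⟨⟨g', hc⟩, hPg⟩

/-- **Theorem 5.2, second part** (via the Lyapunov characterization of exponential
stability): if the Lyapunov-like form inequality `‖Cx‖² - 2Re⟨Ax, Px⟩ ≥ m‖x‖²` holds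
on `dom A` with a bounded non-negative self-adjoint `P` satisfying `ran C* ⊆ ran P`,
then there is a bounded output injection `F` with
`2Re⟨(A + FC)x, Px⟩ ≤ -m‖x‖²` on `dom A` (exponential detectability of `(A,C)`). -/
theorem detectability_of_lyapunov_form_inequality
    {𝕜 H Y : Type*} [RCLike 𝕜]
    [NormedAddCommGroup H] [InnerProductSpace 𝕜 H] [CompleteSpace H]
    [NormedAddCommGroup Y] [InnerProductSpace 𝕜 Y] [CompleteSpace Y]
    (A : H →ₗ.[𝕜] H) (hA : Dense (A.domain : Set H))
    (C : H →L[𝕜] Y)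
    (P : H →L[𝕜] H) (hP : IsSelfAdjoint P)
    (hPnonneg : ∀ x : H, 0 ≤ re ⟪P x, x⟫_𝕜)
    (m : ℝ) (hm : 0 < m)
    (hLyap : ∀ x : A.domain,
      m * ‖(x : H)‖ ^ 2 ≤ ‖C (x : H)‖ ^ 2 - 2 * re ⟪A x, P (x : H)⟫_𝕜)
    (hran : Set.range (adjoint C : Y → H) ⊆ Set.range (P : H → H)) :
    ∃ F : Y →L[𝕜] H, ∀ x : A.domain,
      2 * re ⟪A x + F (C (x : H)), P (x : H)⟫_𝕜 ≤ -(m * ‖(x : H)‖ ^ 2) := by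
  obtain ⟨G, hG⟩ := douglas_aux P (adjoint C) hran
  refine ⟨-G, fun x => ?_⟩
  have h1 : ⟪G (C (x : H)), P (x : H)⟫_𝕜 = ⟪C (x : H), C (x : H)⟫_𝕜 := by
    rw [← ContinuousLinearMap.adjoint_inner_left P, hP.adjoint_eq, hG,
      ContinuousLinearMap.adjoint_inner_left]
  have h2 : re ⟪C (x : H), C (x : H)⟫_𝕜 = ‖C (x : H)‖ ^ 2 := inner_self_eq_norm_sq _
  have h3 := hLyap x
  rw [ContinuousLinearMap.neg_apply, inner_add_left, inner_neg_left, h1, map_add, map_neg, h2]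
  nlinarith [sq_nonneg ‖C (x : H)‖]
end

section
/- Characterization of strict pre-dissipativity with a fixed quadratic storage function (Proposition 4.4): Let P be a bounded self-adjoint operator on H, w ∈ H, α of class 𝒦, and let (x_e,u_e) be a controlled equilibrium. Then the following are equivalent: (i) 2Re⟨Ax + Bu, Px + w⟩ ≤ ℓ(x,u) − ℓ(x_e,u_e) − α(‖x − x_e‖) for all x ∈ dom A and u ∈ U; (ii) w + P x_e ∈ dom A*, A*(w + P x_e) = z + C*C x_e, B*(w + P x_e) = v + K*K u_e, and 2Re⟨Ax + Bu, Px⟩ ≤ ‖Cx‖² + ‖Ku‖² − α(‖x‖) for all x ∈ dom A and u ∈ U. -/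
open scoped InnerProductSpace
open RCLike ContinuousLinearMap

theorem aux_lin {𝕜 E : Type*} [RCLike 𝕜] [AddCommGroup E] [Module 𝕜 E] (f : E →ₗ[𝕜] 𝕜)
    (h : ∀ x, re (f x) = 0) (x : E) : f x = 0 := by
  have h1 := h ((starRingEnd 𝕜 (f x)) • x)
  rw [map_smul, smul_eq_mul, RCLike.conj_mul, ← RCLike.ofReal_pow, RCLike.ofReal_re] at h1
  simpa using h1

theorem aux_quad (Q L : ℝ) (h : ∀ t : ℝ, t ^ 2 * Q ≤ 2 * t * L) : L = 0 := by
  by_contra hL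
  have hL2 : 0 < L ^ 2 := by positivity
  have hp : 0 < |Q| + 1 := by positivity
  have h1 := h (-(L / (|Q| + 1)))
  have e1 : (-(L / (|Q| + 1))) ^ 2 * Q = L ^ 2 / (|Q| + 1) * (Q / (|Q| + 1)) := by
    field_simp
  have e2 : 2 * (-(L / (|Q| + 1))) * L = L ^ 2 / (|Q| + 1) * (-2) := by
    field_simp
  rw [e1, e2] at h1
  have h2 := le_of_mul_le_mul_left h1 (by positivity)
  rw [div_le_iff₀ hp] at h2
  have := neg_abs_le Q
  have := abs_nonneg Q
  linarith

/-- **Proposition 4.4**: characterization of strict pre-dissipativity at a controlled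
equilibrium `(x_e, u_e)` with a fixed quadratic storage function `V_{P,w}` and
dissipation rate `α`. -/
theorem strict_predissipativity_quadratic_storage_iff
    {𝕜 H U Y Z : Type*} [RCLike 𝕜]
    [NormedAddCommGroup H] [InnerProductSpace 𝕜 H] [CompleteSpace H]
    [NormedAddCommGroup U] [InnerProductSpace 𝕜 U] [CompleteSpace U]
    [NormedAddCommGroup Y] [InnerProductSpace 𝕜 Y] [CompleteSpace Y]
    [NormedAddCommGroup Z] [InnerProductSpace 𝕜 Z] [CompleteSpace Z]
    (A : H →ₗ.[𝕜] H) (hA : Dense (A.domain : Set H))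
    (B : U →L[𝕜] H) (C : H →L[𝕜] Y) (K : U →L[𝕜] Z) (z : H) (v : U)
    (P : H →L[𝕜] H) (hP : IsSelfAdjoint P) (w : H)
    (α : ℝ → ℝ) (hα : IsClassK α)
    (xe : H) (ue : U) (hxe : xe ∈ A.domain) (heq : A ⟨xe, hxe⟩ + B ue = 0) :
    (∀ (x : A.domain) (u : U),
      2 * re ⟪A x + B u, P (x : H) + w⟫_𝕜 ≤
        ell C K z v (x : H) u - ell C K z v xe ue - α ‖(x : H) - xe‖)
    ↔
    (∃ hw : w + P xe ∈ A.adjoint.domain,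
      A.adjoint ⟨w + P xe, hw⟩ = z + adjoint C (C xe) ∧
      adjoint B (w + P xe) = v + adjoint K (K ue) ∧
      ∀ (x : A.domain) (u : U),
        2 * re ⟪A x + B u, P (x : H)⟫_𝕜 ≤
          ‖C (x : H)‖ ^ 2 + ‖K u‖ ^ 2 - α ‖(x : H)‖) := by
  have key : ∀ (h : A.domain) (g : U),
      2 * re ⟪A (h + ⟨xe, hxe⟩) + B (g + ue), P ((h + ⟨xe, hxe⟩ : A.domain) : H) + w⟫_𝕜 -
        (ell C K z v ((h + ⟨xe, hxe⟩ : A.domain) : H) (g + ue) - ell C K z v xe ue) =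
      2 * re ⟪A h + B g, P (h : H)⟫_𝕜 - (‖C (h : H)‖ ^ 2 + ‖K g‖ ^ 2) -
      2 * (re ⟪z + adjoint C (C xe), (h : H)⟫_𝕜 + re ⟪v + adjoint K (K ue), g⟫_𝕜 -
        re ⟪w + P xe, A h + B g⟫_𝕜) := by
    intro h g
    have e1 : A (h + ⟨xe, hxe⟩) + B (g + ue) = A h + B g := by
      rw [A.map_add, B.map_add, add_add_add_comm, heq, add_zero]
    have e2 : P ((h + ⟨xe, hxe⟩ : A.domain) : H) + w = P (h : H) + (w + P xe) := by
      simp only [Submodule.coe_add, map_add]; abel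
    rw [e1, e2, inner_add_right, map_add, inner_re_symm (𝕜 := 𝕜) (w + P xe) (A h + B g)]
    simp only [ell, Submodule.coe_add, map_add, inner_add_left (z), inner_add_left (v),
      inner_add_right z, inner_add_right v, adjoint_inner_left,
      norm_add_sq (𝕜 := 𝕜), inner_re_symm (𝕜 := 𝕜) (C xe) (C (h : H)),
      inner_re_symm (𝕜 := 𝕜) (K ue) (K g)]
    ring
  have hα0 : ∀ r : ℝ, 0 ≤ r → 0 ≤ α r := fun r hr => by
    have := hα.2.1.monotoneOn (Set.mem_Ici.2 le_rfl) (Set.mem_Ici.2 hr) hr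
    rwa [hα.2.2] at this
  constructor
  · intro H1
    have H2 : ∀ (h : A.domain) (g : U),
        2 * re ⟪A h + B g, P (h : H)⟫_𝕜 - (‖C (h : H)‖ ^ 2 + ‖K g‖ ^ 2) + α ‖(h : H)‖ ≤
        2 * (re ⟪z + adjoint C (C xe), (h : H)⟫_𝕜 + re ⟪v + adjoint K (K ue), g⟫_𝕜 -
          re ⟪w + P xe, A h + B g⟫_𝕜) := by
      intro h g
      have h1 := H1 (h + ⟨xe, hxe⟩) (g + ue)
      have h2 := key h g
      have h3 : ((h + ⟨xe, hxe⟩ : A.domain) : H) - xe = h := by simp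
      rw [h3] at h1
      linarith
    have H3 : ∀ (h : A.domain) (g : U),
        re ⟪z + adjoint C (C xe), (h : H)⟫_𝕜 + re ⟪v + adjoint K (K ue), g⟫_𝕜 -
          re ⟪w + P xe, A h + B g⟫_𝕜 = 0 := by
      intro h g
      refine aux_quad (2 * re ⟪A h + B g, P (h : H)⟫_𝕜 - (‖C (h : H)‖ ^ 2 + ‖K g‖ ^ 2)) _ ?_
      intro t
      have h1 := H2 ((t : 𝕜) • h) ((t : 𝕜) • g)
      have h2 := hα0 ‖(((t : 𝕜) • h : A.domain) : H)‖ (norm_nonneg _)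
      rw [A.map_smul, B.map_smul, ← smul_add] at h1
      simp only [Submodule.coe_smul, map_smul, inner_smul_left, inner_smul_right, norm_smul,
        RCLike.conj_ofReal, RCLike.re_ofReal_mul, mul_pow, RCLike.norm_ofReal, sq_abs] at h1 h2
      linarith
    have H4 : ∀ h : A.domain, ⟪z + adjoint C (C xe), (h : H)⟫_𝕜 = ⟪w + P xe, A h⟫_𝕜 := by
      intro h
      have := aux_lin ((innerₛₗ 𝕜 (z + adjoint C (C xe))).comp A.domain.subtype -
        (innerₛₗ 𝕜 (w + P xe)).comp A.toFun) (fun x => by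
          have := H3 x 0
          simp only [inner_zero_right, map_zero, add_zero] at this
          rw [← map_sub] at this
          exact this) h
      exact sub_eq_zero.1 this
    have H5 : ∀ g : U, ⟪v + adjoint K (K ue), g⟫_𝕜 = ⟪w + P xe, B g⟫_𝕜 := by
      intro g
      have := aux_lin (innerₛₗ 𝕜 (v + adjoint K (K ue)) -
        (innerₛₗ 𝕜 (w + P xe)).comp B.toLinearMap) (fun x => by
          have := H3 0 x
          rw [A.map_zero] at this
          simp only [Submodule.coe_zero, inner_zero_right, map_zero, zero_add] at this
          rw [← map_sub] at this
          exact this) g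
      exact sub_eq_zero.1 this
    have hw := LinearPMap.mem_adjoint_domain_of_exists (T := A) (w + P xe) ⟨_, H4⟩
    refine ⟨hw, LinearPMap.adjoint_apply_eq hA _ H4, ?_, ?_⟩
    · refine ext_inner_right 𝕜 fun g => ?_
      rw [adjoint_inner_left, H5]
    · intro x u
      have h1 := H2 x u
      rw [H3] at h1
      linarith
  · rintro ⟨hw, h1, h2, h3⟩ x u
    have k := key (x - ⟨xe, hxe⟩) (u - ue)
    have h4 := h3 (x - ⟨xe, hxe⟩) (u - ue)
    have e := LinearPMap.adjoint_isFormalAdjoint hA ⟨w + P xe, hw⟩ (x - ⟨xe, hxe⟩)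
    rw [← h1, ← h2, adjoint_inner_left, inner_add_right (w + P xe), map_add re ⟪w + P xe, _⟫_𝕜, e] at k
    simp only [sub_add_cancel] at k
    have h5 : ((x - ⟨xe, hxe⟩ : A.domain) : H) = x - xe := rfl
    rw [h5] at h4 k
    linarith
end

section
/- Characterization of strict dissipativity with a quadratic storage function (Corollary 4.10): Assume there exists c_K > 0 such that ‖Ku‖ ≥ c_K‖Bu‖ for all u ∈ U, and let (x_e,u_e) be a controlled equilibrium. Then there exist a bounded self-adjoint operator P on H, w ∈ H and α of class 𝒦 such that the quadratic function V_{P,w}(x) = ⟨Px,x⟩ + 2Re⟨w,x⟩ is bounded from below and 2Re⟨Ax + Bu, Px + w⟩ ≤ ℓ(x,u) − ℓ(x_e,u_e) − α(‖x − x_e‖) for all x ∈ dom A, u ∈ U, if and only if there exist a bounded non-negative self-adjoint operator Q on H and m > 0 such that (a) there exists w̃ ∈ dom A* ∩ ran Q^{1/2} with A*w̃ = z + C*C x_e and B*w̃ = v + K*K u_e, and (b) ‖Cx‖² − 2Re⟨Ax, Qx⟩ ≥ m‖x‖² for all x ∈ dom A. -/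
open scoped InnerProductSpace
open RCLike ContinuousLinearMap

/-- `w` lies in the range of `Q^{1/2}`, the (unique) non-negative self-adjoint square
root of the non-negative self-adjoint operator `Q`, expressed via the existence of
such a square root. -/
def MemRanSqrt {𝕜 H : Type*} [RCLike 𝕜]
    [NormedAddCommGroup H] [InnerProductSpace 𝕜 H] [CompleteSpace H]
    (Q : H →L[𝕜] H) (w : H) : Prop :=
  ∃ R : H →L[𝕜] H, IsSelfAdjoint R ∧ (∀ x : H, 0 ≤ re ⟪R x, x⟫_𝕜) ∧
    R.comp R = Q ∧ w ∈ Set.range R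


theorem aux_fix {E : Type*} [NormedRing E] [CompleteSpace E] (t : E) (ht : ‖t‖ ≤ 1 / 4)
    (S : Set E) (hS : IsClosed S) (h0 : (0 : E) ∈ S) (hstep : ∀ T ∈ S, t + T * T ∈ S) :
    ∃ T ∈ S, T = t + T * T ∧ ‖T‖ ≤ 1 / 2 := by
  let s : ℕ → ℝ := fun n => Nat.rec 0 (fun _ r => 1 / 4 + r * r) n
  let T : ℕ → E := fun n => Nat.rec 0 (fun _ r => t + r * r) n
  have s0 : s 0 = 0 := rfl
  have T0 : T 0 = 0 := rfl
  have s1 : ∀ n, s (n + 1) = 1 / 4 + s n * s n := fun _ => rfl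
  have T1 : ∀ n, T (n + 1) = t + T n * T n := fun _ => rfl
  have hs : ∀ n, 0 ≤ s n ∧ s n ≤ 1 / 2 := by
    intro n
    induction n with
    | zero => rw [s0]; norm_num
    | succ k ih => rw [s1]; constructor <;> nlinarith [ih.1, ih.2]
  have hT : ∀ n, ‖T n‖ ≤ s n := by
    intro n
    induction n with
    | zero => rw [s0, T0]; simp
    | succ k ih =>
      rw [s1, T1]
      have := norm_add_le t (T k * T k)
      have h2 := norm_mul_le (T k) (T k)
      nlinarith [norm_nonneg (T k)]
  have hd : ∀ n, ‖T (n + 1) - T n‖ ≤ s (n + 1) - s n := by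
    intro n
    induction n with
    | zero => rw [s1, T1, s0, T0]; simpa using ht
    | succ k ih =>
      have e : T (k + 1 + 1) - T (k + 1)
          = T (k + 1) * (T (k + 1) - T k) + (T (k + 1) - T k) * T k := by
        rw [T1 (k + 1)]
        nth_rw 3 [T1 k]
        noncomm_ring
      have e2 : s (k + 1 + 1) - s (k + 1)
          = s (k + 1) * (s (k + 1) - s k) + (s (k + 1) - s k) * s k := by
        rw [s1 (k + 1)]
        nth_rw 3 [s1 k]
        ring
      rw [e, e2]
      refine (norm_add_le _ _).trans (add_le_add ?_ ?_)
      · exact (norm_mul_le _ _).trans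
          (mul_le_mul (hT (k + 1)) ih (norm_nonneg _) (hs (k + 1)).1)
      · exact (norm_mul_le _ _).trans
          (mul_le_mul ih (hT _) (norm_nonneg _) ((norm_nonneg _).trans ih))
  have hsum : Summable (fun n => s (n + 1) - s n) := by
    refine summable_of_sum_range_le (c := 1 / 2) (fun n => (norm_nonneg _).trans (hd n)) ?_
    intro n
    rw [Finset.sum_range_sub, s0]
    linarith [(hs n).2]
  have hc : CauchySeq T := by
    refine cauchySeq_of_summable_dist (Summable.of_nonneg_of_le (fun _ => dist_nonneg) ?_ hsum)
    intro n
    rw [dist_comm, dist_eq_norm]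
    exact hd n
  obtain ⟨L, hL⟩ := cauchySeq_tendsto_of_complete hc
  refine ⟨L, hS.mem_of_tendsto hL (Filter.Eventually.of_forall ?_), ?_, ?_⟩
  · intro n
    induction n with
    | zero => rw [T0]; exact h0
    | succ k ih => rw [T1]; exact hstep _ ih
  · refine tendsto_nhds_unique ((Filter.tendsto_add_atTop_iff_nat 1).2 hL) ?_
    exact (tendsto_const_nhds (x := t)).add (hL.mul hL)
  · exact le_of_tendsto hL.norm (Filter.Eventually.of_forall fun n => (hT n).trans (hs n).2)

theorem aux_sqrt {𝕜 H : Type*} [RCLike 𝕜]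
    [NormedAddCommGroup H] [InnerProductSpace 𝕜 H] [CompleteSpace H]
    (Q : H →L[𝕜] H) (hQ : IsSelfAdjoint Q) (hpos : ∀ x : H, 0 ≤ re ⟪Q x, x⟫_𝕜) :
    ∃ R : H →L[𝕜] H, IsSelfAdjoint R ∧ (∀ x : H, 0 ≤ re ⟪R x, x⟫_𝕜) ∧ R.comp R = Q := by
  set c : ℝ := ‖Q‖ + 1 with hc
  have hc0 : 0 < c := by positivity
  set X : H →L[𝕜] H := 1 - ((c⁻¹ : ℝ) : 𝕜) • Q with hX
  have hsr : ∀ r : ℝ, IsSelfAdjoint ((r : ℝ) : 𝕜) := fun r => RCLike.conj_ofReal r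
  have hXs : IsSelfAdjoint X := (IsSelfAdjoint.one _).sub ((hsr _).smul hQ)
  have hXin : ∀ x, re ⟪X x, x⟫_𝕜 = ‖x‖ ^ 2 - c⁻¹ * re ⟪Q x, x⟫_𝕜 := by
    intro x
    rw [hX, sub_apply, smul_apply, inner_sub_left, inner_smul_left, RCLike.conj_ofReal, map_sub,
      RCLike.re_ofReal_mul, one_apply_eq_self, inner_self_eq_norm_sq]
  have hQb : ∀ x, c⁻¹ * re ⟪Q x, x⟫_𝕜 ≤ ‖x‖ ^ 2 := by
    intro x
    rw [inv_mul_le_iff₀ hc0]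
    have h1 := re_inner_le_norm (𝕜 := 𝕜) (Q x) x
    have h2 := Q.le_opNorm x
    nlinarith [norm_nonneg x, mul_le_mul_of_nonneg_right h2 (norm_nonneg x)]
  have hXn : ‖X‖ ≤ 1 := by
    rw [norm_eq_iSup_rayleighQuotient X hXs.isSymmetric]
    refine ciSup_le fun x => ?_
    have h1 := hXin x
    have h2 := hQb x
    have h3 : 0 ≤ c⁻¹ * re ⟪Q x, x⟫_𝕜 := mul_nonneg (inv_nonneg.2 hc0.le) (hpos x)
    rw [rayleighQuotient, reApplyInnerSelf_apply, h1, abs_of_nonneg (div_nonneg (by linarith) (by positivity))]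
    exact div_le_one_of_le₀ (by linarith) (by positivity)
  have h4 : ‖(((1 / 4 : ℝ) : ℝ) : 𝕜) • X‖ ≤ 1 / 4 := by
    rw [norm_smul, RCLike.norm_ofReal]
    rw [abs_of_nonneg (by norm_num)]
    linarith
  obtain ⟨T, hTs, hTe, hTn⟩ := aux_fix ((((1 / 4 : ℝ) : ℝ) : 𝕜) • X) h4
    {T | IsSelfAdjoint T} (isClosed_eq continuous_star continuous_id) (IsSelfAdjoint.zero _)
    (by
      intro T hT
      have hT' : IsSelfAdjoint T := hT
      have : IsSelfAdjoint (T * T) := by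
        have := hT'.pow 2
        rwa [pow_two] at this
      exact ((hsr _).smul hXs).add this)
  have hTs' : IsSelfAdjoint T := hTs
  refine ⟨((Real.sqrt c : ℝ) : 𝕜) • (1 - ((2 : ℝ) : 𝕜) • T), ?_, ?_, ?_⟩
  · exact (hsr _).smul ((IsSelfAdjoint.one _).sub ((hsr _).smul hTs'))
  · intro x
    have e : re ⟪(((Real.sqrt c : ℝ) : 𝕜) • (1 - ((2 : ℝ) : 𝕜) • T)) x, x⟫_𝕜
        = Real.sqrt c * (‖x‖ ^ 2 - 2 * re ⟪T x, x⟫_𝕜) := by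
      rw [smul_apply, inner_smul_left, RCLike.conj_ofReal, RCLike.re_ofReal_mul,
        sub_apply, smul_apply, inner_sub_left,
        inner_smul_left, RCLike.conj_ofReal, map_sub, RCLike.re_ofReal_mul,
        one_apply_eq_self, inner_self_eq_norm_sq]
    rw [e]
    refine mul_nonneg (Real.sqrt_nonneg _) ?_
    have h1 := re_inner_le_norm (𝕜 := 𝕜) (T x) x
    have h2 := T.le_opNorm x
    nlinarith [norm_nonneg x, mul_le_mul_of_nonneg_right h2 (norm_nonneg x),
      mul_le_mul_of_nonneg_right hTn (mul_nonneg (norm_nonneg x) (norm_nonneg x))]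
  · change (((Real.sqrt c : ℝ) : 𝕜) • (1 - ((2 : ℝ) : 𝕜) • T)) * (((Real.sqrt c : ℝ) : 𝕜) • (1 - ((2 : ℝ) : 𝕜) • T)) = Q
    rw [smul_mul_smul_comm, ← RCLike.ofReal_mul, Real.mul_self_sqrt hc0.le]
    have e : (1 - ((2 : ℝ) : 𝕜) • T) * (1 - ((2 : ℝ) : 𝕜) • T)
        = 1 - ((4 : ℝ) : 𝕜) • (T - T * T) := by
      simp only [sub_mul, mul_sub, smul_mul_assoc, mul_smul_comm, one_mul, mul_one, smul_sub, smul_smul]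
      rw [← RCLike.ofReal_mul]
      have : ((4 : ℝ) : 𝕜) • T = ((2 : ℝ) : 𝕜) • T + ((2 : ℝ) : 𝕜) • T := by
        rw [← add_smul, ← RCLike.ofReal_add]; norm_num
      rw [this]
      norm_num
      abel
    have e2 : T - T * T = (((1 / 4 : ℝ) : ℝ) : 𝕜) • X := sub_eq_iff_eq_add.2 hTe
    rw [e, e2, smul_smul, ← RCLike.ofReal_mul]
    norm_num
    rw [hX, sub_sub_cancel, smul_smul, ← RCLike.ofReal_mul, mul_inv_cancel₀ hc0.ne']
    simp

theorem aux_douglas {𝕜 H : Type*} [RCLike 𝕜]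
    [NormedAddCommGroup H] [InnerProductSpace 𝕜 H] [CompleteSpace H]
    (R : H →L[𝕜] H) (hR : IsSelfAdjoint R) (w : H) (c : ℝ)
    (h : ∀ x, ‖⟪w, x⟫_𝕜‖ ≤ c * ‖R x‖) : w ∈ Set.range R := by
  obtain ⟨g, hg⟩ := (R : H →ₗ[𝕜] H).rangeRestrict.exists_rightInverse_of_surjective
    (LinearMap.range_rangeRestrict _)
  have hg' : ∀ y, R (g y) = y := fun y => congrArg Subtype.val (LinearMap.congr_fun hg y)
  let f : (LinearMap.range (R : H →ₗ[𝕜] H)) →L[𝕜] 𝕜 :=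
    LinearMap.mkContinuous ((innerₛₗ 𝕜 w).comp g) c (by
      intro y
      have := h (g y)
      rw [hg'] at this
      simpa using this)
  obtain ⟨F, hF, -⟩ := exists_extension_norm_eq _ f
  refine ⟨(InnerProductSpace.toDual 𝕜 H).symm F, ?_⟩
  refine ext_inner_right 𝕜 fun x => ?_
  have h1 : ⟪R ((InnerProductSpace.toDual 𝕜 H).symm F), x⟫_𝕜
      = ⟪(InnerProductSpace.toDual 𝕜 H).symm F, R x⟫_𝕜 := hR.isSymmetric _ _
  rw [h1, InnerProductSpace.toDual_symm_apply]
  let y : LinearMap.range (R : H →ₗ[𝕜] H) := ⟨R x, x, rfl⟩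
  have h2 : F (R x) = ⟪w, g y⟫_𝕜 := hF y
  rw [h2]
  have h3 := h (g y - x)
  rw [map_sub, hg', sub_self, norm_zero, mul_zero, norm_le_zero_iff, inner_sub_right] at h3
  exact sub_eq_zero.1 h3

theorem aux_re {𝕜 E : Type*} [RCLike 𝕜] [AddCommGroup E] [Module 𝕜 E] (f : E →ₗ[𝕜] 𝕜)
    (h : ∀ y, re (f y) ≤ 0) (y : E) : f y = 0 := by
  have := h ((starRingEnd 𝕜 (f y)) • y)
  rw [map_smul, smul_eq_mul, RCLike.conj_mul] at this
  norm_cast at this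
  exact norm_eq_zero.1 (by nlinarith [norm_nonneg (f y)])

theorem aux_scal (a b : ℝ) (h : ∀ t : ℝ, 0 < t → t * a ≤ t ^ 2 * b) : a ≤ 0 := by
  by_contra hn
  push Not at hn
  have h1 := h (a / (2 * (|b| + 1))) (by positivity)
  have hb : 0 < 2 * (|b| + 1) := by positivity
  have h2 : a ≤ a / (2 * (|b| + 1)) * b := by
    have : 0 < a / (2 * (|b| + 1)) := by positivity
    nlinarith
  rw [div_mul_eq_mul_div, le_div_iff₀ hb] at h2
  nlinarith [le_abs_self b, abs_nonneg b]

theorem aux_bdd {𝕜 H : Type*} [RCLike 𝕜]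
    [NormedAddCommGroup H] [InnerProductSpace 𝕜 H] [CompleteSpace H]
    (P : H →L[𝕜] H) (w : H) (cb : ℝ)
    (h : ∀ x : H, cb ≤ re ⟪P x, x⟫_𝕜 + 2 * re ⟪w, x⟫_𝕜) (x : H) :
    0 ≤ re ⟪P x, x⟫_𝕜 ∧ ‖⟪w, x⟫_𝕜‖ ^ 2 ≤ |cb| * re ⟪P x, x⟫_𝕜 := by
  -- real scaling
  have hs : ∀ (x : H) (t : ℝ), cb ≤ t ^ 2 * re ⟪P x, x⟫_𝕜 + t * (2 * re ⟪w, x⟫_𝕜) := by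
    intro x t
    have := h ((t : 𝕜) • x)
    rw [map_smul, inner_smul_left, inner_smul_right, inner_smul_right, RCLike.conj_ofReal,
      RCLike.re_ofReal_mul, RCLike.re_ofReal_mul, RCLike.re_ofReal_mul] at this
    linarith
  have hp : 0 ≤ re ⟪P x, x⟫_𝕜 := by
    by_contra hn
    push Not at hn
    set p := re ⟪P x, x⟫_𝕜 with hpdef
    have h1 := hs x (1 + (|cb| + 1) / (-p))
    have h2 := hs x (-(1 + (|cb| + 1) / (-p)))
    have hd : (|cb| + 1) / (-p) * p = -(|cb| + 1) := by
      have hp0 : p ≠ 0 := hn.ne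
      rw [div_neg, neg_mul, div_mul_cancel₀ _ hp0]
    have hd0 : 0 < (|cb| + 1) / (-p) := div_pos (by positivity) (by linarith)
    set d := (|cb| + 1) / (-p)
    have h3 : cb ≤ (1 + d) ^ 2 * p := by
      rw [← hpdef] at h1 h2
      nlinarith
    have h4 : (1 + d) ^ 2 * p = p + 2 * (d * p) + d * (d * p) := by ring
    rw [h4, hd] at h3
    nlinarith [neg_abs_le cb, abs_nonneg cb]
  refine ⟨hp, ?_⟩
  have hre : ∀ x : H, re ⟪w, x⟫_𝕜 ^ 2 ≤ -cb * re ⟪P x, x⟫_𝕜 := by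
    intro x
    have := discrim_le_zero (a := re ⟪P x, x⟫_𝕜) (b := 2 * re ⟪w, x⟫_𝕜) (c := -cb)
      (fun t => by have := hs x t; nlinarith)
    unfold discrim at this
    nlinarith
  have h1 := hre ((starRingEnd 𝕜 ⟪w, x⟫_𝕜) • x)
  have e1 : ⟪w, (starRingEnd 𝕜 ⟪w, x⟫_𝕜) • x⟫_𝕜 = ((‖⟪w, x⟫_𝕜‖ ^ 2 : ℝ) : 𝕜) := by
    rw [inner_smul_right, RCLike.conj_mul]; norm_cast
  have e2 : ⟪P ((starRingEnd 𝕜 ⟪w, x⟫_𝕜) • x), (starRingEnd 𝕜 ⟪w, x⟫_𝕜) • x⟫_𝕜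
      = ((‖⟪w, x⟫_𝕜‖ ^ 2 : ℝ) : 𝕜) * ⟪P x, x⟫_𝕜 := by
    rw [map_smul, inner_smul_left, inner_smul_right, RCLike.conj_conj, ← mul_assoc, RCLike.mul_conj]
    norm_cast
  rw [e1, e2, RCLike.re_ofReal_mul, RCLike.ofReal_re] at h1
  have h5 : -cb * re ⟪P x, x⟫_𝕜 ≤ |cb| * re ⟪P x, x⟫_𝕜 :=
    mul_le_mul_of_nonneg_right (neg_le_abs cb) hp
  rcases (sq_nonneg ‖⟪w, x⟫_𝕜‖).eq_or_lt with h0 | h0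
  · rw [← h0]; positivity
  · have : ‖⟪w, x⟫_𝕜‖ ^ 2 ≤ -cb * re ⟪P x, x⟫_𝕜 := by
      refine le_of_mul_le_mul_left ?_ h0
      nlinarith
    linarith

theorem aux_memRan {𝕜 H : Type*} [RCLike 𝕜]
    [NormedAddCommGroup H] [InnerProductSpace 𝕜 H] [CompleteSpace H]
    (P : H →L[𝕜] H) (hP : IsSelfAdjoint P) (w xe : H) (cb : ℝ)
    (h : ∀ x : H, cb ≤ re ⟪P x, x⟫_𝕜 + 2 * re ⟪w, x⟫_𝕜) : MemRanSqrt P (P xe + w) := by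
  obtain ⟨R, hR, hRp, hRR⟩ := aux_sqrt P hP (fun x => (aux_bdd P w cb h x).1)
  have hin : ∀ x, re ⟪P x, x⟫_𝕜 = ‖R x‖ ^ 2 := by
    intro x
    have h1 : ⟪R (R x), x⟫_𝕜 = ⟪R x, R x⟫_𝕜 := hR.isSymmetric _ _
    rw [← hRR, ContinuousLinearMap.comp_apply, h1, inner_self_eq_norm_sq]
  obtain ⟨r, hr⟩ := aux_douglas R hR w (Real.sqrt |cb|) (by
    intro x
    have h1 := (aux_bdd P w cb h x).2
    rw [hin] at h1
    refine le_of_sq_le_sq ?_ (by positivity)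
    rw [mul_pow, Real.sq_sqrt (abs_nonneg _)]
    exact h1)
  refine ⟨R, hR, hRp, hRR, R xe + r, ?_⟩
  rw [map_add, hr, ← hRR, ContinuousLinearMap.comp_apply]

theorem abs_real_inner_le_norm_aux {𝕜 H : Type*} [RCLike 𝕜]
    [NormedAddCommGroup H] [InnerProductSpace 𝕜 H] (x y : H) :
    -(‖x‖ * ‖y‖) ≤ re ⟪x, y⟫_𝕜 := by
  have := re_inner_le_norm (𝕜 := 𝕜) (-x) y
  rw [inner_neg_left, map_neg, norm_neg] at this
  linarith

/-- **Corollary 4.10**: characterization of strict dissipativity at a controlled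
equilibrium `(x_e, u_e)` with a quadratic storage function (i.e. strict
pre-dissipativity with a quadratic storage function bounded from below). -/
theorem strict_dissipativity_quadratic_storage_iff
    {𝕜 H U Y Z : Type*} [RCLike 𝕜]
    [NormedAddCommGroup H] [InnerProductSpace 𝕜 H] [CompleteSpace H]
    [NormedAddCommGroup U] [InnerProductSpace 𝕜 U] [CompleteSpace U]
    [NormedAddCommGroup Y] [InnerProductSpace 𝕜 Y] [CompleteSpace Y]
    [NormedAddCommGroup Z] [InnerProductSpace 𝕜 Z] [CompleteSpace Z]
    (A : H →ₗ.[𝕜] H) (hA : Dense (A.domain : Set H))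
    (B : U →L[𝕜] H) (C : H →L[𝕜] Y) (K : U →L[𝕜] Z) (z : H) (v : U)
    (cK : ℝ) (hcK : 0 < cK) (hKB : ∀ u : U, cK * ‖B u‖ ≤ ‖K u‖)
    (xe : H) (ue : U) (hxe : xe ∈ A.domain) (heq : A ⟨xe, hxe⟩ + B ue = 0) :
    (∃ P : H →L[𝕜] H, IsSelfAdjoint P ∧ ∃ w : H,
      -- the quadratic storage function V_{P,w} is bounded from below
      (∃ cb : ℝ, ∀ x : H, cb ≤ re ⟪P x, x⟫_𝕜 + 2 * re ⟪w, x⟫_𝕜) ∧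
      ∃ α : ℝ → ℝ, IsClassK α ∧
        ∀ (x : A.domain) (u : U),
          2 * re ⟪A x + B u, P (x : H) + w⟫_𝕜 ≤
            ell C K z v (x : H) u - ell C K z v xe ue - α ‖(x : H) - xe‖)
    ↔
    (∃ Q : H →L[𝕜] H, IsSelfAdjoint Q ∧ (∀ x : H, 0 ≤ re ⟪Q x, x⟫_𝕜) ∧
      ∃ m : ℝ, 0 < m ∧
        (∃ w' : H, ∃ hw' : w' ∈ A.adjoint.domain, MemRanSqrt Q w' ∧
          A.adjoint ⟨w', hw'⟩ = z + adjoint C (C xe) ∧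
          adjoint B w' = v + adjoint K (K ue)) ∧
        ∀ x : A.domain,
          m * ‖(x : H)‖ ^ 2 ≤ ‖C (x : H)‖ ^ 2 - 2 * re ⟪A x, Q (x : H)⟫_𝕜) := by
  have hell : ∀ (y : H) (η : U), ell C K z v (y + xe) (η + ue) - ell C K z v xe ue
      = ‖C y‖ ^ 2 + ‖K η‖ ^ 2 + 2 * re ⟪z + adjoint C (C xe), y⟫_𝕜
        + 2 * re ⟪v + adjoint K (K ue), η⟫_𝕜 := by
    intro y η
    unfold ell
    rw [map_add, map_add, norm_add_sq (𝕜 := 𝕜), norm_add_sq (𝕜 := 𝕜)]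
    simp only [inner_add_left, inner_add_right, map_add, adjoint_inner_left]
    rw [inner_re_symm (C y), inner_re_symm (K η)]
    ring
  have hlin : ∀ (P : H →L[𝕜] H) (w : H) (y : A.domain) (η : U),
      2 * re ⟪A (y + ⟨xe, hxe⟩) + B (η + ue), P ((y : H) + xe) + w⟫_𝕜
      = 2 * re ⟪A y, P y⟫_𝕜 + 2 * re ⟪B η, P y⟫_𝕜 + 2 * re ⟪P xe + w, A y⟫_𝕜
        + 2 * re ⟪adjoint B (P xe + w), η⟫_𝕜 := by
    intro P w y η
    have e : A (y + ⟨xe, hxe⟩) + B (η + ue) = A y + B η := by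
      rw [A.map_add, map_add, add_add_add_comm, heq, add_zero]
    rw [e, map_add, add_assoc, adjoint_inner_left]
    rw [inner_re_symm (P xe + w), inner_re_symm (P xe + w)]
    simp only [inner_add_left, inner_add_right, map_add]
    ring
  constructor
  · rintro ⟨P, hP, w, ⟨cb, hcb⟩, α, ⟨-, hα, hα0⟩, hineq⟩
    have hαnn : ∀ t, 0 ≤ t → 0 ≤ α t := by
      intro t ht
      rw [← hα0]
      exact hα.monotoneOn (Set.mem_Ici.2 le_rfl) ht ht
    have hmain : ∀ (y : A.domain) (η : U),
        2 * re ⟪A y, P y⟫_𝕜 + 2 * re ⟪B η, P y⟫_𝕜 + 2 * re ⟪P xe + w, A y⟫_𝕜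
        + 2 * re ⟪adjoint B (P xe + w), η⟫_𝕜 ≤
        ‖C y‖ ^ 2 + ‖K η‖ ^ 2 + 2 * re ⟪z + adjoint C (C xe), y⟫_𝕜
        + 2 * re ⟪v + adjoint K (K ue), η⟫_𝕜 - α ‖(y : H)‖ := by
      intro y η
      have h1 := hineq (y + ⟨xe, hxe⟩) (η + ue)
      have h2 := hlin P w y η
      have h3 := hell y η
      simp only [Submodule.coe_add, add_sub_cancel_right] at h1
      linarith
    have hAw : ∀ y : A.domain, ⟪P xe + w, A y⟫_𝕜 - ⟪z + adjoint C (C xe), (y : H)⟫_𝕜 = 0 := by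
      refine aux_re ((innerₛₗ 𝕜 (P xe + w)).comp A.toFun
        - (innerₛₗ 𝕜 (z + adjoint C (C xe))).comp A.domain.subtype) ?_
      intro y
      change re (⟪P xe + w, A y⟫_𝕜 - ⟪z + adjoint C (C xe), (y : H)⟫_𝕜) ≤ 0
      refine aux_scal _ ((‖C y‖ ^ 2 - 2 * re ⟪A y, P y⟫_𝕜) / 2) ?_
      intro t ht
      have h1 := hmain ((t : 𝕜) • y) 0
      have h2 := hαnn _ (norm_nonneg (((t : 𝕜) • y : A.domain) : H))
      simp only [A.map_smul, Submodule.coe_smul, map_smul, inner_smul_left, inner_smul_right,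
        RCLike.conj_ofReal, RCLike.re_ofReal_mul, norm_smul, RCLike.norm_ofReal, mul_pow, sq_abs,
        map_zero, inner_zero_left, inner_zero_right, norm_zero] at h1 h2
      rw [map_sub]
      nlinarith
    have hBw : ∀ η : U, ⟪adjoint B (P xe + w), η⟫_𝕜 - ⟪v + adjoint K (K ue), η⟫_𝕜 = 0 := by
      refine aux_re (innerₛₗ 𝕜 (adjoint B (P xe + w)) - innerₛₗ 𝕜 (v + adjoint K (K ue))) ?_
      intro η
      change re (⟪adjoint B (P xe + w), η⟫_𝕜 - ⟪v + adjoint K (K ue), η⟫_𝕜) ≤ 0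
      refine aux_scal _ (‖K η‖ ^ 2 / 2) ?_
      intro t ht
      have h1 := hmain 0 ((t : 𝕜) • η)
      simp only [A.map_zero, Submodule.coe_zero, map_smul, inner_smul_left, inner_smul_right,
        RCLike.conj_ofReal, RCLike.re_ofReal_mul, norm_smul, RCLike.norm_ofReal, mul_pow, sq_abs,
        map_zero, inner_zero_left, inner_zero_right, norm_zero, hα0] at h1
      rw [map_sub]
      nlinarith
    have hdom : P xe + w ∈ A.adjoint.domain :=
      LinearPMap.mem_adjoint_domain_of_exists _ ⟨_, fun y => (sub_eq_zero.1 (hAw y)).symm⟩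
    refine ⟨P, hP, fun x => (aux_bdd P w cb hcb x).1, α 1, ?_,
      ⟨P xe + w, hdom, aux_memRan P hP w xe cb hcb, ?_, ?_⟩, ?_⟩
    · rw [← hα0]
      exact hα (Set.mem_Ici.2 le_rfl) (Set.mem_Ici.2 zero_le_one) zero_lt_one
    · exact LinearPMap.adjoint_apply_eq hA _ fun y => (sub_eq_zero.1 (hAw y)).symm
    · exact ext_inner_right 𝕜 fun η => sub_eq_zero.1 (hBw η)
    · intro y
      have hq : ∀ y : A.domain, α ‖(y : H)‖ ≤ ‖C y‖ ^ 2 - 2 * re ⟪A y, P y⟫_𝕜 := by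
        intro y
        have h1 := hmain y 0
        have h2 := sub_eq_zero.1 (hAw y)
        rw [h2] at h1
        simp only [map_zero, inner_zero_left, inner_zero_right, norm_zero] at h1
        nlinarith
      by_cases hy : (y : H) = 0
      · have h1 := hq y
        rw [hy, norm_zero, hα0] at h1
        rw [hy, norm_zero]
        simpa using h1
      · have hn : 0 < ‖(y : H)‖ := norm_pos_iff.2 hy
        have h1 := hq (((‖(y : H)‖⁻¹ : ℝ) : 𝕜) • y)
        simp only [A.map_smul, Submodule.coe_smul, map_smul, inner_smul_left, inner_smul_right,
          RCLike.conj_ofReal, RCLike.re_ofReal_mul, norm_smul, RCLike.norm_ofReal, mul_pow, sq_abs,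
          abs_of_pos (inv_pos.2 hn), inv_mul_cancel₀ hn.ne'] at h1
        have h2 : α 1 ≤ (‖C y‖ ^ 2 - 2 * re ⟪A y, P y⟫_𝕜) / ‖(y : H)‖ ^ 2 := by
          refine h1.trans (le_of_eq ?_)
          field_simp
        rwa [le_div_iff₀ (by positivity)] at h2
  · rintro ⟨Q, hQ, hQp, m, hm, ⟨w', hw', ⟨R, hR, hRp, hRR, r, hr⟩, hAw, hBw⟩, hq⟩
    obtain ⟨lam, hl0, hl1, hl2⟩ : ∃ lam : ℝ, 0 < lam ∧ lam ≤ 1 ∧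
        lam * (‖Q‖ / cK) ^ 2 ≤ m / 2 := by
      refine ⟨min 1 (m / 2 / ((‖Q‖ / cK) ^ 2 + 1)), lt_min one_pos (by positivity),
        min_le_left _ _, ?_⟩
      have h1 := min_le_right 1 (m / 2 / ((‖Q‖ / cK) ^ 2 + 1))
      rw [le_div_iff₀ (by positivity)] at h1
      have h0 : 0 < min 1 (m / 2 / ((‖Q‖ / cK) ^ 2 + 1)) := lt_min one_pos (by positivity)
      nlinarith
    have hlQ : ∀ x, ((lam : 𝕜) • Q) x = (lam : 𝕜) • Q x := fun x => rfl
    refine ⟨(lam : 𝕜) • Q, ?_, w' - ((lam : 𝕜) • Q) xe, ?_, fun s => lam * m / 2 * s ^ 2, ?_, ?_⟩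
    · have : IsSelfAdjoint (lam : 𝕜) := RCLike.conj_ofReal lam
      exact this.smul hQ
    · refine ⟨-(‖r - (lam : 𝕜) • R xe‖ ^ 2 / lam), fun x => ?_⟩
      have e1 : re ⟪((lam : 𝕜) • Q) x, x⟫_𝕜 = lam * ‖R x‖ ^ 2 := by
        have h1 : ⟪R (R x), x⟫_𝕜 = ⟪R x, R x⟫_𝕜 := hR.isSymmetric _ _
        rw [hlQ, inner_smul_left, RCLike.conj_ofReal, RCLike.re_ofReal_mul, ← hRR,
          ContinuousLinearMap.comp_apply, h1, inner_self_eq_norm_sq]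
      have e2 : ⟪w' - ((lam : 𝕜) • Q) xe, x⟫_𝕜 = ⟪r - (lam : 𝕜) • R xe, R x⟫_𝕜 := by
        have h1 : ⟪R (r - (lam : 𝕜) • R xe), x⟫_𝕜 = ⟪r - (lam : 𝕜) • R xe, R x⟫_𝕜 :=
          hR.isSymmetric _ _
        rw [← h1, map_sub, hr, map_smul, hlQ, ← hRR, ContinuousLinearMap.comp_apply]
      rw [e1, e2]
      have h3 := abs_real_inner_le_norm_aux (𝕜 := 𝕜) (r - (lam : 𝕜) • R xe) (R x)
      set a := ‖r - (lam : 𝕜) • R xe‖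
      set b := ‖R x‖
      have h4 : 0 ≤ (lam * b - a) ^ 2 / lam := by positivity
      have h5 : (lam * b - a) ^ 2 / lam = lam * b ^ 2 - 2 * (a * b) + a ^ 2 / lam := by
        field_simp
        ring
      linarith
    · refine ⟨by fun_prop, ?_, by simp⟩
      intro a ha b hb hab
      have ha' : 0 ≤ a := ha
      have : a ^ 2 < b ^ 2 := by nlinarith
      exact mul_lt_mul_of_pos_left this (by positivity)
    · intro x u
      obtain ⟨y, rfl⟩ : ∃ y : A.domain, x = y + ⟨xe, hxe⟩ := ⟨x - ⟨xe, hxe⟩, by simp⟩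
      obtain ⟨η, rfl⟩ : ∃ η : U, u = η + ue := ⟨u - ue, by simp⟩
      have h2 := hlin ((lam : 𝕜) • Q) (w' - ((lam : 𝕜) • Q) xe) y η
      have h3 := hell y η
      simp only [Submodule.coe_add, add_sub_cancel_right]
      rw [h2, h3, add_sub_cancel, hBw]
      have h4 : ⟪w', A y⟫_𝕜 = ⟪z + adjoint C (C xe), (y : H)⟫_𝕜 := by
        rw [← hAw]
        exact (LinearPMap.adjoint_isFormalAdjoint hA ⟨w', hw'⟩ y).symm
      rw [h4, hlQ, inner_smul_right, inner_smul_right, RCLike.re_ofReal_mul, RCLike.re_ofReal_mul]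
      have h5 := hq y
      have h6 : re ⟪B η, Q y⟫_𝕜 ≤ ‖K η‖ * (‖Q‖ / cK * ‖(y : H)‖) := by
        have hb : ‖B η‖ ≤ ‖K η‖ / cK := by
          rw [le_div_iff₀ hcK]; linarith [hKB η]
        calc re ⟪B η, Q y⟫_𝕜 ≤ ‖B η‖ * ‖Q y‖ := re_inner_le_norm _ _
          _ ≤ (‖K η‖ / cK) * (‖Q‖ * ‖(y : H)‖) :=
            mul_le_mul hb (Q.le_opNorm _) (norm_nonneg _) (by positivity)
          _ = _ := by ring
      set k := ‖K η‖
      set q := ‖Q‖ / cK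
      set n := ‖(y : H)‖
      have h7 : lam * (m * n ^ 2) ≤ lam * (‖C y‖ ^ 2 - 2 * re ⟪A y, Q y⟫_𝕜) :=
        mul_le_mul_of_nonneg_left h5 hl0.le
      have h8 : lam * re ⟪B η, Q y⟫_𝕜 ≤ lam * (k * (q * n)) := mul_le_mul_of_nonneg_left h6 hl0.le
      have h9 : lam * (lam * q ^ 2) * n ^ 2 ≤ lam * (m / 2) * n ^ 2 := by gcongr
      have h10 : lam * ‖C y‖ ^ 2 ≤ ‖C y‖ ^ 2 := mul_le_of_le_one_left (by positivity) hl1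
      nlinarith [sq_nonneg (k - lam * q * n)]
end

section
/- Existence, uniqueness and optimality condition for the optimal steady state problem (Lemma 4.6): Assume A is densely defined and closed, K is coercive (there is c > 0 with ‖Ku‖ ≥ c‖u‖ for all u ∈ U), and there exist a bounded self-adjoint operator P on H and η, m > 0 such that ‖Cx‖² − 2η Re⟨Ax, Px⟩ ≥ m‖x‖² for all x ∈ dom A. Then the optimal steady state problem, i.e. minimizing ℓ(x,u) over the set 𝒳 := {(x,u) ∈ dom A × U : Ax + Bu = 0}, has a unique solution (x_e,u_e) ∈ 𝒳, and this solution satisfies ⟨x, z + C*C x_e⟩ + ⟨u, v + K*K u_e⟩ = 0 for every (x,u) ∈ 𝒳. -/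
open scoped InnerProductSpace
open RCLike ContinuousLinearMap

open scoped NNReal

theorem oss_real_bound (c m b q r X V : ℝ) (hc : 0 < c) (hm : 0 < m)
    (hq : 0 ≤ q) (hV : c ^ 2 * V ^ 2 ≤ r)
    (h : m * X ^ 2 ≤ q + 2 * b * V * X) :
    X ^ 2 + V ^ 2 ≤ (2 * (1 + 2 * b ^ 2 / (m * c ^ 2)) / m + 1 / c ^ 2) * (q + r) := by
  have hc2 : 0 < c ^ 2 := by positivity
  have hr : 0 ≤ r := le_trans (by positivity) hV
  have h1 : V ^ 2 ≤ r / c ^ 2 := by rw [le_div_iff₀ hc2]; linarith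
  have h2 : 2 * b * V * X ≤ m / 2 * X ^ 2 + 2 * b ^ 2 / m * V ^ 2 := by
    have : m / 2 * X ^ 2 + 2 * b ^ 2 / m * V ^ 2 - 2 * b * V * X
        = (m * X - 2 * b * V) ^ 2 / (2 * m) := by field_simp; ring
    have h3 : 0 ≤ (m * X - 2 * b * V) ^ 2 / (2 * m) := by positivity
    linarith
  have h4 : 2 * b ^ 2 / m * V ^ 2 ≤ 2 * b ^ 2 / m * (r / c ^ 2) := by gcongr
  have h5 : 2 * b ^ 2 / m * (r / c ^ 2) = 2 * b ^ 2 / (m * c ^ 2) * r := by field_simp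
  have h6 : 0 ≤ 2 * b ^ 2 / (m * c ^ 2) * q := by positivity
  have h7 : m / 2 * X ^ 2 ≤ (1 + 2 * b ^ 2 / (m * c ^ 2)) * (q + r) := by linarith
  have h8 : X ^ 2 ≤ 2 * (1 + 2 * b ^ 2 / (m * c ^ 2)) / m * (q + r) := by
    have := mul_le_mul_of_nonneg_left h7 (show 0 ≤ 2 / m by positivity)
    calc X ^ 2 = 2 / m * (m / 2 * X ^ 2) := by field_simp
      _ ≤ _ := this
      _ = _ := by ring
  have h9 : r / c ^ 2 ≤ 1 / c ^ 2 * (q + r) := by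
    have : 0 ≤ 1 / c ^ 2 * q := by positivity
    rw [mul_add]; linarith [show r / c ^ 2 = 1 / c ^ 2 * r by ring]
  linarith

/-- abstract solve -/
theorem oss_solve {𝕜 H U Y Z : Type*} [RCLike 𝕜]
    [NormedAddCommGroup H] [InnerProductSpace 𝕜 H] [CompleteSpace H]
    [NormedAddCommGroup U] [InnerProductSpace 𝕜 U] [CompleteSpace U]
    [NormedAddCommGroup Y] [InnerProductSpace 𝕜 Y] [CompleteSpace Y]
    [NormedAddCommGroup Z] [InnerProductSpace 𝕜 Z] [CompleteSpace Z]
    (S : Submodule 𝕜 (WithLp 2 (H × U))) (hS : IsClosed (S : Set (WithLp 2 (H × U))))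
    (C : H →L[𝕜] Y) (K : U →L[𝕜] Z) (z : H) (v : U) (N : ℝ) (hN : 0 < N)
    (h : ∀ s ∈ S, ‖s.fst‖ ^ 2 + ‖s.snd‖ ^ 2 ≤ N * (‖C s.fst‖ ^ 2 + ‖K s.snd‖ ^ 2)) :
    ∃ s ∈ S, ∀ t ∈ S, ⟪t.fst, z + adjoint C (C s.fst)⟫_𝕜
      + ⟪t.snd, v + adjoint K (K s.snd)⟫_𝕜 = 0 := by
  haveI : CompleteSpace S := hS.completeSpace_coe
  let p1 : S →L[𝕜] H := (WithLp.fstL 2 𝕜 H U).comp S.subtypeL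
  let p2 : S →L[𝕜] U := (WithLp.sndL 2 𝕜 H U).comp S.subtypeL
  let G : S →L[𝕜] S := (adjoint (C.comp p1)).comp (C.comp p1)
    + (adjoint (K.comp p2)).comp (K.comp p2)
  have hG : ∀ s t : S, ⟪t, G s⟫_𝕜 = ⟪C (p1 t), C (p1 s)⟫_𝕜 + ⟪K (p2 t), K (p2 s)⟫_𝕜 := by
    intro s t
    simp only [G, add_apply, comp_apply, inner_add_right, adjoint_inner_right]
  have hN' : (0 : ℝ≥0) < ⟨N⁻¹, by positivity⟩ := by
    change (0 : ℝ) < N⁻¹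
    positivity
  have hu : IsUnit G := by
    refine isUnit_of_forall_le_norm_inner_map G hN' fun s => ?_
    rw [norm_inner_symm, hG, inner_self_eq_norm_sq_to_K, inner_self_eq_norm_sq_to_K]
    have e : ‖((‖C (p1 s)‖ : 𝕜) ^ 2 + (‖K (p2 s)‖ : 𝕜) ^ 2)‖
        = ‖C (p1 s)‖ ^ 2 + ‖K (p2 s)‖ ^ 2 := by
      rw [← RCLike.ofReal_pow, ← RCLike.ofReal_pow, ← RCLike.ofReal_add, RCLike.norm_ofReal,
        abs_of_nonneg (by positivity)]
    rw [e]
    have h1 := h s s.2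
    have h2 : ‖s‖ ^ 2 = ‖(s : WithLp 2 (H × U)).fst‖ ^ 2 + ‖(s : WithLp 2 (H × U)).snd‖ ^ 2 :=
      WithLp.prod_norm_sq_eq_of_L2 _
    change ‖s‖ ^ 2 * N⁻¹ ≤ _
    rw [← div_eq_mul_inv, div_le_iff₀ hN, h2, mul_comm]
    exact h1
  obtain ⟨g, hg⟩ := hu
  let w : S := adjoint p1 z + adjoint p2 v
  let s : S := (↑g⁻¹ : S →L[𝕜] S) (-w)
  have hs : G s = -w := by
    have : (g : S →L[𝕜] S) * (↑g⁻¹ : S →L[𝕜] S) = 1 := g.mul_inv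
    rw [← hg]
    exact congrArg (fun f : S →L[𝕜] S => f (-w)) this
  refine ⟨s, s.2, fun t ht => ?_⟩
  have h1 := hG s ⟨t, ht⟩
  rw [hs, inner_neg_right, inner_add_right, adjoint_inner_right, adjoint_inner_right] at h1
  rw [inner_add_right, inner_add_right, adjoint_inner_right, adjoint_inner_right]
  change -(⟪t.fst, z⟫_𝕜 + ⟪t.snd, v⟫_𝕜) = ⟪C t.fst, C (s : WithLp 2 (H × U)).fst⟫_𝕜
    + ⟪K t.snd, K (s : WithLp 2 (H × U)).snd⟫_𝕜 at h1
  linear_combination -h1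

theorem oss_ell {𝕜 H U Y Z : Type*} [RCLike 𝕜]
    [NormedAddCommGroup H] [InnerProductSpace 𝕜 H] [CompleteSpace H]
    [NormedAddCommGroup U] [InnerProductSpace 𝕜 U] [CompleteSpace U]
    [NormedAddCommGroup Y] [InnerProductSpace 𝕜 Y] [CompleteSpace Y]
    [NormedAddCommGroup Z] [InnerProductSpace 𝕜 Z] [CompleteSpace Z]
    (C : H →L[𝕜] Y) (K : U →L[𝕜] Z) (z : H) (v : U) (xe d : H) (ue e : U)
    (h : ⟪d, z + adjoint C (C xe)⟫_𝕜 + ⟪e, v + adjoint K (K ue)⟫_𝕜 = 0) :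
    ell C K z v (xe + d) (ue + e) = ell C K z v xe ue + (‖C d‖ ^ 2 + ‖K e‖ ^ 2) := by
  rw [inner_add_right, inner_add_right, adjoint_inner_right, adjoint_inner_right] at h
  have h1 := congrArg (re : 𝕜 → ℝ) h
  simp only [map_add, map_zero] at h1
  rw [inner_re_symm d, inner_re_symm (C d), inner_re_symm e, inner_re_symm (K e)] at h1
  unfold ell
  rw [map_add, map_add, norm_add_sq (𝕜 := 𝕜), norm_add_sq (𝕜 := 𝕜), inner_add_right,
    inner_add_right, map_add, map_add]
  linear_combination 2 * h1

/-- **Lemma 4.6**: under closedness of `A`, coercivity of `K` and the Lyapunov-like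
form inequality, the optimal steady-state problem `min ℓ(x,u)` over
`𝒳 = {(x,u) ∈ dom A × U : Ax + Bu = 0}` has a unique solution `(x_e,u_e)`, and this
solution satisfies `⟨x, z + C*Cx_e⟩ + ⟨u, v + K*Ku_e⟩ = 0` for all `(x,u) ∈ 𝒳`. -/
theorem optimal_steady_state_exists_unique
    {𝕜 H U Y Z : Type*} [RCLike 𝕜]
    [NormedAddCommGroup H] [InnerProductSpace 𝕜 H] [CompleteSpace H]
    [NormedAddCommGroup U] [InnerProductSpace 𝕜 U] [CompleteSpace U]
    [NormedAddCommGroup Y] [InnerProductSpace 𝕜 Y] [CompleteSpace Y]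
    [NormedAddCommGroup Z] [InnerProductSpace 𝕜 Z] [CompleteSpace Z]
    (A : H →ₗ.[𝕜] H) (hA : Dense (A.domain : Set H)) (hAclosed : A.IsClosed)
    (B : U →L[𝕜] H) (C : H →L[𝕜] Y) (K : U →L[𝕜] Z) (z : H) (v : U)
    (c : ℝ) (hc : 0 < c) (hK : ∀ u : U, c * ‖u‖ ≤ ‖K u‖)
    (P : H →L[𝕜] H) (hP : IsSelfAdjoint P)
    (η m : ℝ) (hη : 0 < η) (hm : 0 < m)
    (hLyap : ∀ x : A.domain,
      m * ‖(x : H)‖ ^ 2 ≤ ‖C (x : H)‖ ^ 2 - 2 * η * re ⟪A x, P (x : H)⟫_𝕜) :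
    ∃ (xe : H) (ue : U) (hxe : xe ∈ A.domain),
      A ⟨xe, hxe⟩ + B ue = 0 ∧
      -- (xe, ue) minimizes ℓ over 𝒳
      (∀ (x : A.domain) (u : U), A x + B u = 0 →
        ell C K z v xe ue ≤ ell C K z v (x : H) u) ∧
      -- the minimizer is unique
      (∀ (x : A.domain) (u : U), A x + B u = 0 →
        (∀ (x' : A.domain) (u' : U), A x' + B u' = 0 →
          ell C K z v (x : H) u ≤ ell C K z v (x' : H) u') →
        (x : H) = xe ∧ u = ue) ∧
      -- the optimality (orthogonality) condition
      (∀ (x : A.domain) (u : U), A x + B u = 0 →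
        ⟪(x : H), z + adjoint C (C xe)⟫_𝕜 + ⟪u, v + adjoint K (K ue)⟫_𝕜 = 0) := by
  let S : Submodule 𝕜 (WithLp 2 (H × U)) :=
    A.graph.comap ((WithLp.fstL 2 𝕜 H U).prod
      (-(B.comp (WithLp.sndL 2 𝕜 H U))) : WithLp 2 (H × U) →L[𝕜] H × H).toLinearMap
  have hSc : IsClosed (S : Set (WithLp 2 (H × U))) :=
    IsClosed.preimage (ContinuousLinearMap.continuous _) hAclosed
  have hmem : ∀ s : WithLp 2 (H × U), s ∈ S ↔
      ∃ hx : s.fst ∈ A.domain, A ⟨s.fst, hx⟩ + B s.snd = 0 := by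
    intro s
    change (s.fst, -(B s.snd)) ∈ A.graph ↔ _
    rw [LinearPMap.mem_graph_iff]
    constructor
    · rintro ⟨y, h1, h2⟩
      have h1' : (y : H) = s.fst := h1
      refine ⟨h1' ▸ y.2, ?_⟩
      have : (⟨s.fst, h1' ▸ y.2⟩ : A.domain) = y := Subtype.ext h1'.symm
      rw [this, h2]
      exact neg_add_cancel _
    · rintro ⟨hx, h⟩
      exact ⟨⟨s.fst, hx⟩, rfl, eq_neg_of_add_eq_zero_left h⟩
  have hmem' : ∀ (x : A.domain) (u : U), A x + B u = 0 → WithLp.toLp 2 ((x : H), u) ∈ S :=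
    fun x u h => (hmem _).2 ⟨x.2, h⟩
  set N : ℝ := 2 * (1 + 2 * (η * (‖B‖ * ‖P‖)) ^ 2 / (m * c ^ 2)) / m + 1 / c ^ 2 with hNdef
  have hN : 0 < N := by positivity
  have hb : ∀ s ∈ S, ‖s.fst‖ ^ 2 + ‖s.snd‖ ^ 2 ≤ N * (‖C s.fst‖ ^ 2 + ‖K s.snd‖ ^ 2) := by
    intro s hs
    obtain ⟨hx, h⟩ := (hmem s).1 hs
    refine oss_real_bound c m _ _ _ _ _ hc hm (by positivity) ?_ ?_
    · rw [← mul_pow]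
      exact pow_le_pow_left₀ (by positivity) (hK _) 2
    · have h1 := hLyap ⟨s.fst, hx⟩
      rw [eq_neg_of_add_eq_zero_left h, inner_neg_left, map_neg] at h1
      have h2 : re ⟪B s.snd, P s.fst⟫_𝕜 ≤ (‖B‖ * ‖s.snd‖) * (‖P‖ * ‖s.fst‖) :=
        (re_inner_le_norm _ _).trans
          (mul_le_mul (B.le_opNorm _) (P.le_opNorm _) (norm_nonneg _) (by positivity))
      have h3 := mul_le_mul_of_nonneg_left h2 (show 0 ≤ 2 * η by positivity)
      simp only at h1
      linarith
  obtain ⟨s, hs, ho⟩ := oss_solve S hSc C K z v N hN hb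
  obtain ⟨hx, h⟩ := (hmem s).1 hs
  have key : ∀ (x : A.domain) (u : U), A x + B u = 0 →
      ell C K z v (x : H) u = ell C K z v s.fst s.snd
        + (‖C ((x : H) - s.fst)‖ ^ 2 + ‖K (u - s.snd)‖ ^ 2) := by
    intro x u hxu
    have := oss_ell C K z v s.fst ((x : H) - s.fst) s.snd (u - s.snd)
      (ho _ (S.sub_mem (hmem' x u hxu) hs))
    rwa [add_sub_cancel, add_sub_cancel] at this
  refine ⟨s.fst, s.snd, hx, h, ?_, ?_, ?_⟩
  · intro x u hxu
    rw [key x u hxu]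
    have : 0 ≤ ‖C ((x : H) - s.fst)‖ ^ 2 + ‖K (u - s.snd)‖ ^ 2 := by positivity
    linarith
  · intro x u hxu hmin
    have h1 := hmin ⟨s.fst, hx⟩ s.snd h
    rw [key x u hxu] at h1
    have h2 : ‖(x : H) - s.fst‖ ^ 2 + ‖u - s.snd‖ ^ 2
        ≤ N * (‖C ((x : H) - s.fst)‖ ^ 2 + ‖K (u - s.snd)‖ ^ 2) :=
      hb _ (S.sub_mem (hmem' x u hxu) hs)
    have h3 : ‖C ((x : H) - s.fst)‖ ^ 2 + ‖K (u - s.snd)‖ ^ 2 ≤ 0 := by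
      simp only at h1
      linarith
    have h4 := mul_nonpos_of_nonneg_of_nonpos hN.le h3
    have h5 := sq_nonneg ‖(x : H) - s.fst‖
    have h6 := sq_nonneg ‖u - s.snd‖
    constructor
    · have : ‖(x : H) - s.fst‖ ^ 2 = 0 := by linarith
      exact sub_eq_zero.1 (norm_eq_zero.1 (pow_eq_zero_iff two_ne_zero |>.1 this))
    · have : ‖u - s.snd‖ ^ 2 = 0 := by linarith
      exact sub_eq_zero.1 (norm_eq_zero.1 (pow_eq_zero_iff two_ne_zero |>.1 this))
  · intro x u hxu
    exact ho _ (hmem' x u hxu)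
end

section
/- Minimizers of quadratic functions (Lemma 4.1, second part): Let H be a Hilbert space over 𝕜 (𝕜 = ℝ or ℂ), P a bounded non-negative self-adjoint operator on H (⟨Px,x⟩ ≥ 0 for all x), w ∈ H, and define V_{P,w} : H → ℝ by V_{P,w}(x) := ⟨Px,x⟩ + 2Re⟨w,x⟩. Then V_{P,w} has a minimizer if and only if w ∈ ran P; and in that case the set of minimizers of V_{P,w} equals {x ∈ H : Px = −w}. -/
open scoped InnerProductSpace
open RCLike ContinuousLinearMap

theorem quad_expand_aux
    {𝕜 H : Type*} [RCLike 𝕜]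
    [NormedAddCommGroup H] [InnerProductSpace 𝕜 H] [CompleteSpace H]
    (P : H →L[𝕜] H) (hP : IsSelfAdjoint P) (w m h : H) :
    re ⟪P (m + h), m + h⟫_𝕜 + 2 * re ⟪w, m + h⟫_𝕜 =
      re ⟪P m, m⟫_𝕜 + 2 * re ⟪w, m⟫_𝕜 + re ⟪P h, h⟫_𝕜 + 2 * re ⟪P m + w, h⟫_𝕜 := by
  have h1 : re ⟪P h, m⟫_𝕜 = re ⟪P m, h⟫_𝕜 := by
    have h2 : ⟪P h, m⟫_𝕜 = ⟪h, P m⟫_𝕜 := hP.isSymmetric h m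
    rw [h2, inner_re_symm]
  simp only [map_add, inner_add_left, inner_add_right, h1]
  ring

theorem quad_min_iff_aux
    {𝕜 H : Type*} [RCLike 𝕜]
    [NormedAddCommGroup H] [InnerProductSpace 𝕜 H] [CompleteSpace H]
    (P : H →L[𝕜] H) (hP : IsSelfAdjoint P)
    (hPnonneg : ∀ x : H, 0 ≤ re ⟪P x, x⟫_𝕜) (w m : H) :
    (∀ x : H,
        re ⟪P m, m⟫_𝕜 + 2 * re ⟪w, m⟫_𝕜 ≤ re ⟪P x, x⟫_𝕜 + 2 * re ⟪w, x⟫_𝕜)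
      ↔ P m = -w := by
  constructor
  · intro hm
    rw [← add_eq_zero_iff_eq_neg]
    set g := P m + w with hg
    set a := re ⟪P g, g⟫_𝕜 with ha
    have ha0 : 0 ≤ a := hPnonneg g
    have key : ∀ t : ℝ, 0 ≤ t * t * a + 2 * (t * ‖g‖ ^ 2) := by
      intro t
      have h1 := hm (m + (t : 𝕜) • g)
      rw [quad_expand_aux P hP, ← hg] at h1
      have e1 : re ⟪P ((t : 𝕜) • g), (t : 𝕜) • g⟫_𝕜 = t * t * a := by
        rw [map_smul, inner_smul_left, inner_smul_right, conj_ofReal, re_ofReal_mul,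
          re_ofReal_mul, mul_assoc]
      have e2 : re ⟪g, (t : 𝕜) • g⟫_𝕜 = t * ‖g‖ ^ 2 := by
        rw [inner_smul_right, re_ofReal_mul, inner_self_eq_norm_sq]
      rw [e1, e2] at h1
      linarith
    have h3 := key (-(‖g‖ ^ 2 / (a + 1)))
    have h4 : -(‖g‖ ^ 2 / (a + 1)) * -(‖g‖ ^ 2 / (a + 1)) * a
        + 2 * (-(‖g‖ ^ 2 / (a + 1)) * ‖g‖ ^ 2)
        = -((‖g‖ ^ 2) ^ 2 * ((a + 2) / (a + 1) ^ 2)) := by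
      field_simp
      ring
    rw [h4] at h3
    have h5 : 0 < (a + 2) / (a + 1) ^ 2 := by positivity
    by_contra hne
    have h6 : 0 < ‖g‖ := norm_pos_iff.mpr hne
    have h7 : 0 < (‖g‖ ^ 2) ^ 2 * ((a + 2) / (a + 1) ^ 2) := by positivity
    linarith
  · intro hm x
    have h1 := quad_expand_aux P hP w m (x - m)
    rw [add_sub_cancel, hm, neg_add_cancel, inner_zero_left, map_zero] at h1
    rw [h1, hm]
    linarith [hPnonneg (x - m)]

/-- **Lemma 4.1, second part**: for a bounded non-negative self-adjoint operator `P`,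
the quadratic function `V_{P,w}(x) = ⟨Px,x⟩ + 2Re⟨w,x⟩` has a minimizer if and only
if `w ∈ ran P`, in which case the set of minimizers is `{x : Px = -w}`. -/
theorem quadratic_minimizer_iff
    {𝕜 H : Type*} [RCLike 𝕜]
    [NormedAddCommGroup H] [InnerProductSpace 𝕜 H] [CompleteSpace H]
    (P : H →L[𝕜] H) (hP : IsSelfAdjoint P)
    (hPnonneg : ∀ x : H, 0 ≤ re ⟪P x, x⟫_𝕜) (w : H) :
    ((∃ xm : H, ∀ x : H,
        re ⟪P xm, xm⟫_𝕜 + 2 * re ⟪w, xm⟫_𝕜 ≤ re ⟪P x, x⟫_𝕜 + 2 * re ⟪w, x⟫_𝕜)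
      ↔ w ∈ Set.range P)
    ∧
    (w ∈ Set.range P →
      {xm : H | ∀ x : H,
        re ⟪P xm, xm⟫_𝕜 + 2 * re ⟪w, xm⟫_𝕜 ≤ re ⟪P x, x⟫_𝕜 + 2 * re ⟪w, x⟫_𝕜}
      = {x : H | P x = -w}) := by
  constructor
  · constructor
    · rintro ⟨m, hm⟩
      have h := (quad_min_iff_aux P hP hPnonneg w m).1 hm
      exact ⟨-m, by rw [map_neg, h, neg_neg]⟩
    · rintro ⟨y, hy⟩
      exact ⟨-y, (quad_min_iff_aux P hP hPnonneg w (-y)).2 (by rw [map_neg, hy])⟩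
  · intro _
    ext m
    exact quad_min_iff_aux P hP hPnonneg w m
end

section
/- Boundedness from below of the stage cost (Corollary 4.2): Let H, U, Y, Z be Hilbert spaces over 𝕜 (𝕜 = ℝ or ℂ), C : H → Y and K : U → Z bounded linear operators, z ∈ H, v ∈ U, and define ℓ : H × U → ℝ by ℓ(x,u) := ‖Cx‖² + ‖Ku‖² + 2Re⟨z,x⟩ + 2Re⟨v,u⟩. Then ℓ is bounded from below on H × U if and only if z ∈ ran C* and v ∈ ran K*. -/
open scoped InnerProductSpace
open RCLike ContinuousLinearMap

theorem aux_mem_range {𝕜 H Y : Type*} [RCLike 𝕜]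
    [NormedAddCommGroup H] [InnerProductSpace 𝕜 H] [CompleteSpace H]
    [NormedAddCommGroup Y] [InnerProductSpace 𝕜 Y] [CompleteSpace Y]
    (C : H →L[𝕜] Y) (z : H) (cb : ℝ)
    (h : ∀ x : H, cb ≤ ‖C x‖ ^ 2 + 2 * re ⟪z, x⟫_𝕜) :
    z ∈ Set.range (adjoint C : Y → H) := by
  have hcb : cb ≤ 0 := by simpa using h 0
  have key : ∀ x, ‖⟪z, x⟫_𝕜‖ ≤ √(-cb) * ‖C x‖ := by
    intro x
    obtain ⟨c, hc, hcz⟩ := RCLike.exists_norm_eq_mul_self (⟪z, x⟫_𝕜)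
    have h1 : ∀ t : ℝ, 0 ≤ ‖C x‖ ^ 2 * (t * t) + (-2 * ‖⟪z, x⟫_𝕜‖) * t + (-cb) := by
      intro t
      have h2 := h (((-t : ℝ) : 𝕜) • c • x)
      rw [inner_smul_right, inner_smul_right, ← hcz, map_smul, map_smul, norm_smul, norm_smul, hc,
        ← RCLike.ofReal_mul, RCLike.ofReal_re, RCLike.norm_ofReal, one_mul, mul_pow, sq_abs] at h2
      nlinarith
    have h3 := discrim_le_zero h1
    unfold discrim at h3
    refine (sq_le_sq₀ (norm_nonneg _) (by positivity)).1 ?_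
    rw [mul_pow, Real.sq_sqrt (by linarith)]
    nlinarith
  have hker : (innerSL 𝕜 z : H →ₗ[𝕜] 𝕜) ∈ LinearMap.range (C : H →ₗ[𝕜] Y).dualMap := by
    rw [LinearMap.range_dualMap_eq_dualAnnihilator_ker, Submodule.mem_dualAnnihilator]
    intro x hx
    have hx' : C x = 0 := hx
    have := key x
    rw [hx'] at this
    simpa using this
  obtain ⟨g, hg⟩ := hker
  have hg' : ∀ x, g (C x) = ⟪z, x⟫_𝕜 := fun x => LinearMap.congr_fun hg x
  let p : Submodule 𝕜 Y := LinearMap.range (C : H →ₗ[𝕜] Y)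
  let f : StrongDual 𝕜 p := (g.domRestrict p).mkContinuous (√(-cb)) (by
    rintro ⟨_, x, rfl⟩
    have := key x
    rw [← hg' x] at this
    exact this)
  obtain ⟨F, hF, -⟩ := exists_extension_norm_eq p f
  refine ⟨(InnerProductSpace.toDual 𝕜 Y).symm F, ?_⟩
  refine ext_inner_right 𝕜 fun x => ?_
  rw [adjoint_inner_left, InnerProductSpace.toDual_symm_apply, ← hg' x]
  exact hF ⟨C x, x, rfl⟩

theorem aux_lower {𝕜 H Y : Type*} [RCLike 𝕜]
    [NormedAddCommGroup H] [InnerProductSpace 𝕜 H] [CompleteSpace H]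
    [NormedAddCommGroup Y] [InnerProductSpace 𝕜 Y] [CompleteSpace Y]
    (C : H →L[𝕜] Y) (y : Y) (x : H) :
    -‖y‖ ^ 2 ≤ ‖C x‖ ^ 2 + 2 * re ⟪adjoint C y, x⟫_𝕜 := by
  rw [adjoint_inner_left]
  have := norm_add_sq (𝕜 := 𝕜) y (C x)
  nlinarith [sq_nonneg ‖y + C x‖]

/-- **Corollary 4.2**: the stage cost
`ℓ(x,u) = ‖Cx‖² + ‖Ku‖² + 2Re⟨z,x⟩ + 2Re⟨v,u⟩` is bounded from below on `H × U`
if and only if `z ∈ ran C*` and `v ∈ ran K*`. -/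
theorem stage_cost_bddBelow_iff
    {𝕜 H U Y Z : Type*} [RCLike 𝕜]
    [NormedAddCommGroup H] [InnerProductSpace 𝕜 H] [CompleteSpace H]
    [NormedAddCommGroup U] [InnerProductSpace 𝕜 U] [CompleteSpace U]
    [NormedAddCommGroup Y] [InnerProductSpace 𝕜 Y] [CompleteSpace Y]
    [NormedAddCommGroup Z] [InnerProductSpace 𝕜 Z] [CompleteSpace Z]
    (C : H →L[𝕜] Y) (K : U →L[𝕜] Z) (z : H) (v : U) :
    (∃ cb : ℝ, ∀ (x : H) (u : U),
        cb ≤ ‖C x‖ ^ 2 + ‖K u‖ ^ 2 + 2 * re ⟪z, x⟫_𝕜 + 2 * re ⟪v, u⟫_𝕜)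
    ↔
    (z ∈ Set.range (adjoint C : Y → H) ∧ v ∈ Set.range (adjoint K : Z → U)) := by
  constructor
  · rintro ⟨cb, h⟩
    refine ⟨aux_mem_range C z cb fun x => ?_, aux_mem_range K v cb fun u => ?_⟩
    · simpa using h x 0
    · simpa using h 0 u
  · rintro ⟨⟨y, rfl⟩, ⟨w, rfl⟩⟩
    refine ⟨-‖y‖ ^ 2 + -‖w‖ ^ 2, fun x u => ?_⟩
    linarith [aux_lower C y x, aux_lower K w u]
end

section
/- Shift of strict pre-dissipativity with quadratic storage to the origin (Lemma 4.3): Let (x_e,u_e) be a controlled equilibrium, P a bounded self-adjoint operator on H, w ∈ H, and α of class 𝒦. Define ℓ̃(x,u) := ‖Cx‖² + ‖Ku‖² + 2Re⟨z + C*C x_e, x⟩ + 2Re⟨v + K*K u_e, u⟩ and w̃ := w + P x_e. Then 2Re⟨Ax + Bu, Px + w⟩ ≤ ℓ(x,u) − ℓ(x_e,u_e) − α(‖x − x_e‖) holds for all x ∈ dom A and u ∈ U if and only if 2Re⟨Ax + Bu, Px + w̃⟩ ≤ ℓ̃(x,u) − α(‖x‖) holds for all x ∈ dom A and u ∈ U.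 -/
open scoped InnerProductSpace
open RCLike ContinuousLinearMap

/-- **Lemma 4.3**: the OCP is strictly pre-dissipative at `(x_e,u_e)` with quadratic
storage function `V_{P,w}` if and only if the shifted OCP (with rotated stage cost
`ℓ̃`) is strictly pre-dissipative at `(0,0)` with quadratic storage function
`V_{P,w̃}`, where `w̃ = w + Px_e`. -/
theorem strict_predissipativity_quadratic_shift_iff
    {𝕜 H U Y Z : Type*} [RCLike 𝕜]
    [NormedAddCommGroup H] [InnerProductSpace 𝕜 H] [CompleteSpace H]
    [NormedAddCommGroup U] [InnerProductSpace 𝕜 U] [CompleteSpace U]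
    [NormedAddCommGroup Y] [InnerProductSpace 𝕜 Y] [CompleteSpace Y]
    [NormedAddCommGroup Z] [InnerProductSpace 𝕜 Z] [CompleteSpace Z]
    (A : H →ₗ.[𝕜] H) (hA : Dense (A.domain : Set H))
    (B : U →L[𝕜] H) (C : H →L[𝕜] Y) (K : U →L[𝕜] Z) (z : H) (v : U)
    (xe : H) (ue : U) (hxe : xe ∈ A.domain) (heq : A ⟨xe, hxe⟩ + B ue = 0)
    (P : H →L[𝕜] H) (hP : IsSelfAdjoint P) (w : H)
    (α : ℝ → ℝ) (hα : IsClassK α) :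
    (∀ (x : A.domain) (u : U),
      2 * re ⟪A x + B u, P (x : H) + w⟫_𝕜 ≤
        ell C K z v (x : H) u - ell C K z v xe ue - α ‖(x : H) - xe‖)
    ↔
    (∀ (x : A.domain) (u : U),
      2 * re ⟪A x + B u, P (x : H) + (w + P xe)⟫_𝕜 ≤
        ‖C (x : H)‖ ^ 2 + ‖K u‖ ^ 2 +
          2 * re ⟪z + adjoint C (C xe), (x : H)⟫_𝕜 +
          2 * re ⟪v + adjoint K (K ue), u⟫_𝕜 - α ‖(x : H)‖) := by
  have hell : ∀ (x : H) (u : U),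
      ell C K z v (x + xe) (u + ue) - ell C K z v xe ue =
        ‖C x‖ ^ 2 + ‖K u‖ ^ 2 +
          2 * re ⟪z + adjoint C (C xe), x⟫_𝕜 +
          2 * re ⟪v + adjoint K (K ue), u⟫_𝕜 := by
    intro x u
    have h1 := norm_add_sq (𝕜 := 𝕜) (C x) (C xe)
    have h2 := norm_add_sq (𝕜 := 𝕜) (K u) (K ue)
    rw [inner_re_symm] at h1 h2
    simp only [ell, map_add, inner_add_left, inner_add_right, adjoint_inner_left, h1, h2]
    ring
  have hdyn : ∀ (x : A.domain) (u : U),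
      A (x + ⟨xe, hxe⟩) + B (u + ue) = A x + B u := by
    intro x u
    rw [A.map_add, map_add, add_add_add_comm, heq, add_zero]
  have hPw : ∀ x : H, P (x + xe) + w = P x + (w + P xe) := by
    intro x
    rw [map_add]
    abel
  have key : ∀ (x : A.domain) (u : U),
      (2 * re ⟪A (x + ⟨xe, hxe⟩) + B (u + ue), P ((x + ⟨xe, hxe⟩ : A.domain) : H) + w⟫_𝕜 ≤
        ell C K z v ((x + ⟨xe, hxe⟩ : A.domain) : H) (u + ue) - ell C K z v xe ue
          - α ‖((x + ⟨xe, hxe⟩ : A.domain) : H) - xe‖) ↔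
      (2 * re ⟪A x + B u, P (x : H) + (w + P xe)⟫_𝕜 ≤
        ‖C (x : H)‖ ^ 2 + ‖K u‖ ^ 2 +
          2 * re ⟪z + adjoint C (C xe), (x : H)⟫_𝕜 +
          2 * re ⟪v + adjoint K (K ue), u⟫_𝕜 - α ‖(x : H)‖) := by
    intro x u
    rw [hdyn, Submodule.coe_add, hPw, hell, add_sub_cancel_right]
  constructor
  · intro h x u
    exact (key x u).1 (h _ _)
  · intro h x u
    have := (key (x - ⟨xe, hxe⟩) (u - ue)).2 (h _ _)
    rwa [sub_add_cancel, sub_add_cancel] at this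
end

section
/- Joint coercivity estimate from the Lyapunov-like form inequality (intermediate step in the proof of Theorem 4.5): Let H, U, Y, Z be Hilbert spaces over 𝕜 (𝕜 = ℝ or ℂ), A a densely defined linear operator in H with domain dom A, B : U → H, C : H → Y, K : U → Z bounded linear operators, and P a bounded self-adjoint operator on H. Assume there exists c_K > 0 with ‖Ku‖ ≥ c_K‖Bu‖ for all u ∈ U, and there exists m > 0 with ‖Cx‖² − 2Re⟨Ax, Px⟩ ≥ m‖x‖² for all x ∈ dom A. Then there exist γ ∈ (0,1) and c > 0 such that ‖Cx‖² + ‖Ku‖² − 2γ Re⟨Ax + Bu, Px⟩ ≥ c‖x‖² for all x ∈ dom A and all u ∈ U. -/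
open scoped InnerProductSpace
open RCLike ContinuousLinearMap

/-- **Intermediate step in the proof of Theorem 4.5**: if `‖Ku‖ ≥ c_K‖Bu‖` for all
`u` and the Lyapunov-like form inequality `‖Cx‖² - 2Re⟨Ax, Px⟩ ≥ m‖x‖²` holds on
`dom A`, then there are `γ ∈ (0,1)` and `c > 0` with
`‖Cx‖² + ‖Ku‖² - 2γ Re⟨Ax + Bu, Px⟩ ≥ c‖x‖²` for all `x ∈ dom A`, `u ∈ U`. -/
theorem joint_coercivity_of_lyapunov_form_inequality
    {𝕜 H U Y Z : Type*} [RCLike 𝕜]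
    [NormedAddCommGroup H] [InnerProductSpace 𝕜 H] [CompleteSpace H]
    [NormedAddCommGroup U] [InnerProductSpace 𝕜 U] [CompleteSpace U]
    [NormedAddCommGroup Y] [InnerProductSpace 𝕜 Y] [CompleteSpace Y]
    [NormedAddCommGroup Z] [InnerProductSpace 𝕜 Z] [CompleteSpace Z]
    (A : H →ₗ.[𝕜] H) (hA : Dense (A.domain : Set H))
    (B : U →L[𝕜] H) (C : H →L[𝕜] Y) (K : U →L[𝕜] Z)
    (P : H →L[𝕜] H) (hP : IsSelfAdjoint P)
    (cK : ℝ) (hcK : 0 < cK) (hKB : ∀ u : U, cK * ‖B u‖ ≤ ‖K u‖)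
    (m : ℝ) (hm : 0 < m)
    (hLyap : ∀ x : A.domain,
      m * ‖(x : H)‖ ^ 2 ≤ ‖C (x : H)‖ ^ 2 - 2 * re ⟪A x, P (x : H)⟫_𝕜) :
    ∃ γ : ℝ, 0 < γ ∧ γ < 1 ∧ ∃ c : ℝ, 0 < c ∧
      ∀ (x : A.domain) (u : U),
        c * ‖(x : H)‖ ^ 2 ≤
          ‖C (x : H)‖ ^ 2 + ‖K u‖ ^ 2 - 2 * γ * re ⟪A x + B u, P (x : H)⟫_𝕜 := by
  obtain ⟨r, hr⟩ : ∃ r : ℝ, r = ‖P‖ / cK := ⟨_, rfl⟩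
  have hrP : ‖P‖ = r * cK := by rw [hr]; field_simp
  have hr0 : 0 ≤ r := by rw [hr]; positivity
  have hd : 0 < 2 * (m + r ^ 2) := by positivity
  obtain ⟨γ, hγ⟩ : ∃ γ : ℝ, γ = m / (2 * (m + r ^ 2)) := ⟨_, rfl⟩
  have hγ0 : 0 < γ := by rw [hγ]; positivity
  have hγ1 : γ < 1 := by
    rw [hγ, div_lt_one hd]; nlinarith [sq_nonneg r]
  have hγe : γ * (2 * (m + r ^ 2)) = m := by rw [hγ]; field_simp
  have hγr : γ * r ^ 2 ≤ m / 2 := by nlinarith [mul_pos hγ0 hm]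
  refine ⟨γ, hγ0, hγ1, γ * m / 2, by positivity, fun x u => ?_⟩
  have h1 : re ⟪B u, P (x : H)⟫_𝕜 ≤ ‖K u‖ * (r * ‖(x : H)‖) := by
    calc re ⟪B u, P (x : H)⟫_𝕜 ≤ ‖B u‖ * ‖P (x : H)‖ := re_inner_le_norm _ _
      _ ≤ ‖B u‖ * (‖P‖ * ‖(x : H)‖) := by gcongr; exact P.le_opNorm _
      _ = (cK * ‖B u‖) * (r * ‖(x : H)‖) := by rw [hrP]; ring
      _ ≤ _ := by gcongr; exact hKB u
  rw [inner_add_left, map_add]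
  have h2 := mul_le_mul_of_nonneg_left (hLyap x) hγ0.le
  have h3 := mul_le_mul_of_nonneg_left h1 hγ0.le
  have h4 := sq_nonneg (‖K u‖ - γ * (r * ‖(x : H)‖))
  have h5 := mul_le_mul_of_nonneg_left hγr (mul_nonneg hγ0.le (sq_nonneg ‖(x : H)‖))
  have h6 := mul_nonneg (sub_nonneg.2 hγ1.le) (sq_nonneg ‖C (x : H)‖)
  nlinarith
end
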